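/- arXiv:1612.05455 — 2 statements merged into one kernel-verified Lean document; each statement's English description precedes it below -/
import Mathlib

section
/- Let $a, x > 0$ and $\nu \in \mathbb{C}$ with $0 < \mathrm{Re}\,\nu < 1/2$, and let $\gamma$ satisfy $2\,\mathrm{Re}\,\nu < \gamma < 1$. Then $J_\nu^2(ax) + Y_\nu^2(ax) = \dfrac{\cos(\pi\nu)}{2\pi^3 \sqrt{\pi}\, i} \int_{\gamma - i\infty}^{\gamma + i\infty} \Gamma\big(\tfrac{1 - s}{2}\big)\, \Gamma\big(\tfrac{s}{2}\big)\, \Gamma\big(\tfrac{s}{2} - \nu\big)\, \Gamma\big(\tfrac{s}{2} + \nu\big)\, (ax)^{-s}\, ds$. -/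
/-!
The Mellin–Barnes integral is evaluated by residues. Write
`h s = Γ((1 - s)/2) Γ(s/2) Γ(s/2 - ν) Γ(s/2 + ν)` and `y = a x`.

The line `Re s = γ` is moved to the left by `2` again and again. Every strip
`γ - 2 - 2N < Re s < γ - 2N` contains exactly three simple poles of `h s * y ^ (-s)`, namely
`2ν - 2N`, `-2ν - 2N` and `-2N`. To stay on a fixed strip, `h` is translated instead of the contour:
`mbKer ν y N s = h (s - 2N) * y ^ (2N - s)`, and `mbNum` is its holomorphic numerator. The residue
step is `mbKer_shift`, resting on `vertical_shift_pole`. The remainder after `N` steps tends to `0`,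
because each translation multiplies the kernel by `O(1 / N)` (`norm_mbKer_succ_le`); hence the
integral is the sum of all residues (`tendsto_sum_residues`).

The three residue series are Cauchy products of Bessel series: by Chu–Vandermonde and the
duplication formula for Pochhammer symbols they are multiples of `J_ν(y) ^ 2`, `J_{-ν}(y) ^ 2` and
`J_ν(y) J_{-ν}(y)` (`hasSum_mbNum`). The reflection and duplication formulas for `Γ` evaluate the
constants, so that the integral equals
`4 π³ √π ((J_ν² + J_{-ν}²) / (sin πν · sin 2πν) - J_ν J_{-ν} / sin² πν)` (`integral_mbKer_eq`).
Finally `Y_ν = (J_ν cos πν - J_{-ν}) / sin πν` (`besselY_eq`), and the claim is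
`sin² + cos² = 1`.
-/


open MeasureTheory Filter Set Topology Complex intervalIntegral

/-- Bessel function of the first kind of complex order `ν`. -/
noncomputable def besselJ (ν z : ℂ) : ℂ :=
  ∑' n : ℕ, ((-1 : ℂ) ^ n / (Complex.Gamma (n + 1) * Complex.Gamma (n + ν + 1))) *
    (z / 2) ^ (2 * (n : ℂ) + ν)

/-- Bessel function of the second kind of complex order `ν`, defined by the usual
limit formula (which for non-integer order reduces to
`(J ν z * cos (π ν) - J (-ν) z) / sin (π ν)`). -/
noncomputable def besselY (ν z : ℂ) : ℂ :=
  limUnder (𝓝[≠] ν) fun μ =>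
    (besselJ μ z * Complex.cos (Real.pi * μ) - besselJ (-μ) z) / Complex.sin (Real.pi * μ)

/-- The Weber kernel `C_ν(α, β) = J_ν(α) Y_ν(β) - Y_ν(α) J_ν(β)`. -/
noncomputable def weberC (ν α β : ℂ) : ℂ :=
  besselJ ν α * besselY ν β - besselY ν α * besselJ ν β

/-- Gauss hypergeometric series `₂F₁(a, b; c; z)`. -/
noncomputable def hyp2F1 (a b c z : ℂ) : ℂ :=
  ∑' n : ℕ, ((ascPochhammer ℂ n).eval a * (ascPochhammer ℂ n).eval b /
    ((ascPochhammer ℂ n).eval c * (n.factorial : ℂ))) * z ^ n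

/-- The associated Legendre function of the second kind `Q_μ^ν(z)` (order `ν`, degree `μ`),
for `z` off the cut `(-∞, 1]`. -/
noncomputable def legendreQ (ν μ z : ℂ) : ℂ :=
  Complex.exp (ν * Real.pi * Complex.I) * (Real.sqrt Real.pi : ℂ) * 2 ^ (-μ - 1) *
    (Complex.Gamma (μ + ν + 1) / Complex.Gamma (μ + 3 / 2)) *
    z ^ (-μ - ν - 1) * (z ^ 2 - 1) ^ (ν / 2) *
    hyp2F1 ((μ + ν + 2) / 2) ((μ + ν + 1) / 2) (μ + 3 / 2) (1 / z ^ 2)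

/-- `g` belongs to the class `𝓜₀,₁⁻¹(L_c)` on the vertical line `Re s = μ`, with Mellin
transform `gs`:  `s ↦ s * gs s` is integrable on the line, and `g` is recovered from `gs`
by the inverse Mellin transform. -/
def MellinClass01 (μ : ℝ) (g : ℝ → ℂ) (gs : ℂ → ℂ) : Prop :=
  (Integrable fun τ : ℝ => ((μ : ℂ) + τ * Complex.I) * gs ((μ : ℂ) + τ * Complex.I)) ∧
  ∀ x : ℝ, 0 < x →
    g x = (2 * Real.pi * Complex.I)⁻¹ *
      (Complex.I * ∫ τ : ℝ, gs ((μ : ℂ) + τ * Complex.I) * (x : ℂ) ^ (-((μ : ℂ) + τ * Complex.I)))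

/-! ### Shifting vertical lines of integration -/

/-- Moving a vertical line of integration across a strip without poles. Only continuity is asked
at the point `p`, so that a removable singularity is admitted there. -/
lemma vertical_shift {f : ℂ → ℂ} {a b C T₀ : ℝ} {p : ℂ} (hab : a ≤ b)
    (hc : ∀ s : ℂ, a ≤ s.re → s.re ≤ b → ContinuousAt f s)
    (hd : ∀ s : ℂ, a ≤ s.re → s.re ≤ b → s ≠ p → DifferentiableAt ℂ f s)
    (hC : ∀ s : ℂ, a ≤ s.re → s.re ≤ b → T₀ ≤ |s.im| → ‖f s‖ ≤ C / |s.im|)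
    (ha : Integrable fun τ : ℝ => f (a + τ * I)) (hb : Integrable fun τ : ℝ => f (b + τ * I)) :
    ∫ τ : ℝ, f (b + τ * I) = ∫ τ : ℝ, f (a + τ * I) := by
  have hA := intervalIntegral_tendsto_integral ha tendsto_neg_atTop_atBot tendsto_id
  have hB := intervalIntegral_tendsto_integral hb tendsto_neg_atTop_atBot tendsto_id
  have hhor : ∀ σ : ℝ, |σ| = 1 → Tendsto (fun T : ℝ => ∫ x in a..b, f (x + ((σ * T : ℝ) : ℂ) * I))
      atTop (𝓝 0) := by
    intro σ hσ
    have hlim : Tendsto (fun T : ℝ => C / T * |b - a|) atTop (𝓝 0) := by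
      simpa using (tendsto_const_nhds.div_atTop tendsto_id).mul_const |b - a|
    refine squeeze_zero_norm' ?_ hlim
    filter_upwards [eventually_ge_atTop T₀, eventually_gt_atTop 0] with T hT hT0
    refine norm_integral_le_of_norm_le_const fun x hx => ?_
    rw [uIoc_of_le hab] at hx
    have him : |((x : ℂ) + ((σ * T : ℝ) : ℂ) * I).im| = T := by
      simp [abs_mul, hσ, abs_of_pos hT0]
    have := hC ((x : ℂ) + ((σ * T : ℝ) : ℂ) * I) (by simpa using hx.1.le) (by simpa using hx.2)
      (by rwa [him])
    rwa [him] at this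
  have hrect : ∀ T : ℝ, (∫ x in a..b, f (x + (((-1) * T : ℝ) : ℂ) * I)) -
      (∫ x in a..b, f (x + ((1 * T : ℝ) : ℂ) * I)) + I * (∫ y in (-T)..T, f (b + y * I)) -
      I * (∫ y in (-T)..T, f (a + y * I)) = 0 := by
    intro T
    have hmem : ∀ s : ℂ, s.re ∈ uIcc a b → a ≤ s.re ∧ s.re ≤ b := by
      intro s hs
      rw [uIcc_of_le hab] at hs
      exact hs
    have := integral_boundary_rect_eq_zero_of_differentiable_on_off_countable f
      (⟨a, -T⟩ : ℂ) (⟨b, T⟩ : ℂ) {p} (countable_singleton p)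
      (fun s hs => (hc s (hmem s hs.1).1 (hmem s hs.1).2).continuousWithinAt)
      (fun s hs => hd s (hmem s (Ioo_subset_Icc_self hs.1.1)).1
        (hmem s (Ioo_subset_Icc_self hs.1.1)).2 hs.2)
    simpa using this
  have hlim := ((((hhor (-1) (by simp)).sub (hhor 1 (by simp))).add (hB.const_mul I)).sub
    (hA.const_mul I))
  simp only [id] at hlim
  simp only [hrect] at hlim
  have h0 := tendsto_nhds_unique hlim tendsto_const_nhds
  have : I * ((∫ τ : ℝ, f (b + τ * I)) - ∫ τ : ℝ, f (a + τ * I)) = 0 := by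
    linear_combination h0
  exact sub_eq_zero.1 ((mul_eq_zero.1 this).resolve_left I_ne_zero)

lemma integral_poisson {σ : ℝ} (hσ : σ ≠ 0) :
    Integrable (fun τ : ℝ => σ / (σ ^ 2 + τ ^ 2)) ∧
    ∫ τ : ℝ, σ / (σ ^ 2 + τ ^ 2) = |σ| / σ * Real.pi := by
  have heq : (fun τ : ℝ => σ / (σ ^ 2 + τ ^ 2)) = fun τ => σ⁻¹ * (1 + (τ / σ) ^ 2)⁻¹ := by
    ext τ
    have : σ ^ 2 + τ ^ 2 ≠ 0 := by positivity
    have h2 : 1 + (τ / σ) ^ 2 ≠ 0 := by positivity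
    field_simp
  rw [heq]
  refine ⟨(integrable_inv_one_add_sq.comp_div hσ).const_mul _, ?_⟩
  rw [MeasureTheory.integral_const_mul, Measure.integral_comp_div (fun x : ℝ => (1 + x ^ 2)⁻¹),
    integral_univ_inv_one_add_sq, smul_eq_mul]
  ring

lemma ofReal_add_mul_I_ne_zero {σ : ℝ} (hσ : σ ≠ 0) (τ : ℝ) : (σ : ℂ) + (τ : ℂ) * I ≠ 0 := by
  intro h
  apply hσ
  simpa using congrArg Complex.re h

/-- The integral of the difference of two Cauchy kernels over a vertical line: it vanishes when the
line lies to the right of both poles, and is `-2π` when it separates them. -/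
lemma integral_cauchy_sub {σ ρ : ℝ} (hσ : σ ≠ 0) (hρ : 0 < ρ) (t : ℝ) :
    Integrable (fun τ : ℝ => 1 / ((σ : ℂ) + ((τ - t : ℝ) : ℂ) * I)
      - 1 / ((ρ : ℂ) + ((τ - t : ℝ) : ℂ) * I)) ∧
    ∫ τ : ℝ, (1 / ((σ : ℂ) + ((τ - t : ℝ) : ℂ) * I) - 1 / ((ρ : ℂ) + ((τ - t : ℝ) : ℂ) * I)) =
      if 0 < σ then 0 else -(2 * (Real.pi : ℂ)) := by
  set φ : ℝ → ℂ := fun τ => 1 / ((σ : ℂ) + (τ : ℂ) * I) - 1 / ((ρ : ℂ) + (τ : ℂ) * I) with hφ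
  have hA : ∀ τ : ℝ, (σ : ℂ) + (τ : ℂ) * I ≠ 0 := ofReal_add_mul_I_ne_zero hσ
  have hB : ∀ τ : ℝ, (ρ : ℂ) + (τ : ℂ) * I ≠ 0 := ofReal_add_mul_I_ne_zero hρ.ne'
  have hcont : Continuous φ := by
    refine (continuous_const.div (by fun_prop) hA).sub (continuous_const.div (by fun_prop) hB)
  have hn : ∀ (α τ : ℝ), ‖(α : ℂ) + (τ : ℂ) * I‖ ^ 2 = α ^ 2 + τ ^ 2 := by
    intro α τ
    rw [← Complex.normSq_eq_norm_sq, Complex.normSq_add_mul_I]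
  have hint : Integrable φ := by
    have hdom : Integrable fun τ : ℝ =>
        |ρ - σ| * (σ⁻¹ * (σ / (σ ^ 2 + τ ^ 2)) + ρ⁻¹ * (ρ / (ρ ^ 2 + τ ^ 2))) :=
      (((integral_poisson hσ).1.const_mul _).add ((integral_poisson hρ.ne').1.const_mul _)).const_mul _
    refine hdom.mono' hcont.aestronglyMeasurable (ae_of_all _ fun τ => ?_)
    have h1 : φ τ = ((ρ - σ : ℝ) : ℂ) / (((σ : ℂ) + (τ : ℂ) * I) * ((ρ : ℂ) + (τ : ℂ) * I)) := by
      simp only [hφ]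
      rw [div_sub_div _ _ (hA τ) (hB τ)]
      push_cast
      ring
    rw [h1, norm_div, norm_mul, Complex.norm_real, Real.norm_eq_abs, div_eq_mul_inv]
    refine mul_le_mul_of_nonneg_left ?_ (abs_nonneg _)
    have h2 : σ⁻¹ * (σ / (σ ^ 2 + τ ^ 2)) = (‖(σ : ℂ) + (τ : ℂ) * I‖⁻¹) ^ 2 := by
      rw [inv_pow, hn]; field_simp
    have h3 : ρ⁻¹ * (ρ / (ρ ^ 2 + τ ^ 2)) = (‖(ρ : ℂ) + (τ : ℂ) * I‖⁻¹) ^ 2 := by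
      rw [inv_pow, hn]; field_simp
    rw [h2, h3, mul_inv]
    nlinarith [sq_nonneg (‖(σ : ℂ) + (τ : ℂ) * I‖⁻¹ - ‖(ρ : ℂ) + (τ : ℂ) * I‖⁻¹),
      sq_nonneg (‖(σ : ℂ) + (τ : ℂ) * I‖⁻¹), sq_nonneg (‖(ρ : ℂ) + (τ : ℂ) * I‖⁻¹)]
  refine ⟨hint.comp_sub_right t, ?_⟩
  have hshift : ∫ τ : ℝ, (1 / ((σ : ℂ) + ((τ - t : ℝ) : ℂ) * I)
      - 1 / ((ρ : ℂ) + ((τ - t : ℝ) : ℂ) * I)) = ∫ τ : ℝ, φ τ :=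
    integral_sub_right_eq_self φ t
  rw [hshift]
  -- the odd (imaginary) part cancels after averaging `φ τ` with `φ (-τ)`
  have hsym : ∀ τ : ℝ, φ τ + φ (-τ) =
      ((2 * (σ / (σ ^ 2 + τ ^ 2) - ρ / (ρ ^ 2 + τ ^ 2)) : ℝ) : ℂ) := by
    have key : ∀ {α : ℝ}, α ≠ 0 → ∀ τ : ℝ, 1 / ((α : ℂ) + (τ : ℂ) * I) +
        1 / ((α : ℂ) + ((-τ : ℝ) : ℂ) * I) = ((2 * (α / (α ^ 2 + τ ^ 2)) : ℝ) : ℂ) := by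
      intro α hα τ
      have e1 := ofReal_add_mul_I_ne_zero hα τ
      have e2 := ofReal_add_mul_I_ne_zero hα (-τ)
      have e3 : ((α : ℂ) ^ 2 + (τ : ℂ) ^ 2) ≠ 0 := by
        have : α ^ 2 + τ ^ 2 ≠ 0 := by positivity
        exact_mod_cast this
      rw [div_add_div _ _ e1 e2]
      push_cast at e2 ⊢
      rw [div_eq_iff (mul_ne_zero e1 e2)]
      field_simp
      linear_combination (2 * (α : ℂ) * (τ : ℂ) ^ 2) * I_sq
    intro τ
    simp only [hφ]
    have k1 := key hσ τ
    have k2 := key hρ.ne' τ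
    push_cast at k1 k2 ⊢
    linear_combination k1 - k2
  have h2 : (∫ τ : ℝ, φ τ) + ∫ τ : ℝ, φ τ =
      ((2 * (|σ| / σ * Real.pi - |ρ| / ρ * Real.pi) : ℝ) : ℂ) := by
    conv_lhs => rhs; rw [← integral_neg_eq_self φ]
    rw [← integral_add hint hint.comp_neg]
    simp only [hsym]
    rw [integral_complex_ofReal, MeasureTheory.integral_const_mul,
      integral_sub (integral_poisson hσ).1 (integral_poisson hρ.ne').1,
      (integral_poisson hσ).2, (integral_poisson hρ.ne').2]
  rw [abs_of_pos hρ, div_self hρ.ne'] at h2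
  split_ifs with h
  · rw [abs_of_pos h, div_self hσ] at h2
    push_cast at h2
    linear_combination h2 / 2
  · have : σ < 0 := lt_of_le_of_ne (not_lt.1 h) hσ
    rw [abs_of_neg this, neg_div, div_self hσ] at h2
    push_cast at h2
    linear_combination h2 / 2

/-- Residue formula for one simple pole between two vertical lines. -/
lemma vertical_shift_pole {g : ℂ → ℂ} {a b C : ℝ} {p : ℂ} (hap : a < p.re) (hpb : p.re < b)
    (hd : ∀ s : ℂ, a ≤ s.re → s.re ≤ b → DifferentiableAt ℂ g s)
    (hC : ∀ s : ℂ, a ≤ s.re → s.re ≤ b → ‖g s‖ * (1 + s.im ^ 2) ≤ C) :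
    Integrable (fun τ : ℝ => g (a + τ * I) / (a + τ * I - p)) ∧
    Integrable (fun τ : ℝ => g (b + τ * I) / (b + τ * I - p)) ∧
    (∫ τ : ℝ, g (b + τ * I) / (b + τ * I - p)) - (∫ τ : ℝ, g (a + τ * I) / (a + τ * I - p)) =
      2 * Real.pi * g p := by
  have hab : a ≤ b := (hap.trans hpb).le
  have hline : ∀ α : ℝ, a ≤ α → α ≤ b → α ≠ p.re →
      Integrable (fun τ : ℝ => g (α + τ * I) / (α + τ * I - p)) := by
    intro α h1 h2 h3
    have hne : ∀ τ : ℝ, |α - p.re| ≤ ‖(α : ℂ) + τ * I - p‖ := by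
      intro τ
      simpa using Complex.abs_re_le_norm ((α : ℂ) + τ * I - p)
    have hpos : 0 < |α - p.re| := abs_pos.2 (sub_ne_zero.2 h3)
    have hcont : Continuous (fun τ : ℝ => g (α + τ * I) / (α + τ * I - p)) := by
      refine Continuous.div ?_ (by fun_prop) fun τ => norm_pos_iff.1 (hpos.trans_le (hne τ))
      refine continuous_iff_continuousAt.2 fun τ => ?_
      exact ContinuousAt.comp (f := fun τ : ℝ => (α : ℂ) + τ * I) (g := g)
        (hd _ (by simpa using h1) (by simpa using h2)).continuousAt
        (by fun_prop)
    refine (integrable_inv_one_add_sq.const_mul (C / |α - p.re|)).mono'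
      hcont.aestronglyMeasurable (ae_of_all _ fun τ => ?_)
    have := hC (α + τ * I) (by simpa using h1) (by simpa using h2)
    simp only [add_im, ofReal_im, mul_im, ofReal_re, I_im, mul_one, I_re, mul_zero, add_zero,
      zero_add] at this
    rw [norm_div, div_mul_eq_mul_div]
    refine div_le_div₀ ?_ ?_ hpos (hne τ)
    · exact mul_nonneg ((by positivity : (0:ℝ) ≤ _).trans this) (by positivity)
    · rwa [← div_eq_mul_inv, le_div_iff₀ (by positivity)]
  have hIa := hline a le_rfl hab hap.ne
  have hIb := hline b hab le_rfl hpb.ne'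
  refine ⟨hIa, hIb, ?_⟩
  -- subtract `g p * (1 / (s - p) - 1 / (s - p + c))`, whose second pole lies left of the strip
  set c : ℝ := p.re - a + 1 with hc
  have hcpos : 0 < c := by linarith
  set f : ℂ → ℂ := fun s => dslope g p s + g p / (s - p + c) with hf
  have hden : ∀ s : ℂ, a ≤ s.re → s - p + c ≠ 0 := by
    intro s hs h
    have := congrArg Complex.re h
    simp at this
    linarith
  have hf_eq : ∀ s : ℂ, s ≠ p → f s = g s / (s - p) - g p * (1 / (s - p) - 1 / (s - p + c)) := by
    intro s hs
    simp only [hf]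
    rw [dslope_of_ne _ hs, slope_def_field]
    ring
  have hval : ∀ α : ℝ, a ≤ α → α ≤ b → α ≠ p.re →
      Integrable (fun τ : ℝ => f (α + τ * I)) ∧
      ∫ τ : ℝ, f (α + τ * I) = (∫ τ : ℝ, g (α + τ * I) / (α + τ * I - p)) -
        g p * (if 0 < α - p.re then 0 else -(2 * (Real.pi : ℂ))) := by
    intro α h1 h2 h3
    have hq := integral_cauchy_sub (sub_ne_zero.2 h3) (show 0 < α - p.re + c by linarith) p.im
    have hfe : (fun τ : ℝ => f (α + τ * I)) = fun τ : ℝ => g (α + τ * I) / (α + τ * I - p) -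
        g p * (1 / (((α - p.re : ℝ) : ℂ) + ((τ - p.im : ℝ) : ℂ) * I)
          - 1 / (((α - p.re + c : ℝ) : ℂ) + ((τ - p.im : ℝ) : ℂ) * I)) := by
      ext τ
      rw [hf_eq _ (fun h => h3 (by simpa using congrArg Complex.re h))]
      have e : (α : ℂ) + τ * I - p = ((α - p.re : ℝ) : ℂ) + ((τ - p.im : ℝ) : ℂ) * I := by
        apply Complex.ext <;> simp
      rw [e]
      push_cast
      ring_nf
    rw [hfe]
    refine ⟨(hline α h1 h2 h3).sub (hq.1.const_mul _), ?_⟩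
    rw [integral_sub (hline α h1 h2 h3) (hq.1.const_mul _), MeasureTheory.integral_const_mul, hq.2]
  have hva := hval a le_rfl hab hap.ne
  have hvb := hval b hab le_rfl hpb.ne'
  have hfd : ∀ s : ℂ, a ≤ s.re → s.re ≤ b → s ≠ p → DifferentiableAt ℂ f s := by
    intro s h1 h2 h3
    refine ((differentiableAt_dslope_of_ne h3).2 (hd s h1 h2)).add ?_
    exact (differentiableAt_const _).div (by fun_prop) (hden s h1)
  have hfc : ∀ s : ℂ, a ≤ s.re → s.re ≤ b → ContinuousAt f s := by
    intro s h1 h2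
    by_cases h3 : s = p
    · subst h3
      refine (continuousAt_dslope_same.2 (hd s h1 h2)).add ?_
      exact continuousAt_const.div (by fun_prop) (hden s h1)
    · exact (hfd s h1 h2 h3).continuousAt
  have hbound : ∀ s : ℂ, a ≤ s.re → s.re ≤ b → 2 * |p.im| + 1 ≤ |s.im| →
      ‖f s‖ ≤ (2 * C + 4 * ‖g p‖) / |s.im| := by
    intro s h1 h2 h3
    have hs0 : 1 ≤ |s.im| := by linarith [abs_nonneg p.im]
    have hspos : 0 < |s.im| := by linarith
    have hi : |s.im| / 2 ≤ |s.im - p.im| := by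
      have := abs_sub_abs_le_abs_sub s.im p.im
      linarith [abs_nonneg p.im]
    have hn1 : |s.im| / 2 ≤ ‖s - p‖ := hi.trans (by simpa using Complex.abs_im_le_norm (s - p))
    have hn2 : |s.im| / 2 ≤ ‖s - p + c‖ :=
      hi.trans (by simpa using Complex.abs_im_le_norm (s - p + c))
    have hsp : s ≠ p := by
      rintro rfl
      simp at hn1
      linarith
    have hg : ‖g s‖ ≤ C := by
      have := hC s h1 h2
      nlinarith [norm_nonneg (g s), sq_nonneg s.im]
    have b1 : ‖g s / (s - p)‖ ≤ C / (|s.im| / 2) := by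
      rw [norm_div]
      exact div_le_div₀ ((norm_nonneg _).trans hg) hg (by positivity) hn1
    have b2 : ‖g p * (1 / (s - p) - 1 / (s - p + c))‖ ≤
        ‖g p‖ * (1 / (|s.im| / 2) + 1 / (|s.im| / 2)) := by
      rw [norm_mul]
      refine mul_le_mul_of_nonneg_left ((norm_sub_le _ _).trans (add_le_add ?_ ?_)) (norm_nonneg _)
      · rw [norm_div, norm_one]; exact one_div_le_one_div_of_le (by positivity) hn1
      · rw [norm_div, norm_one]; exact one_div_le_one_div_of_le (by positivity) hn2
    rw [hf_eq s hsp]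
    refine (norm_sub_le _ _).trans ((add_le_add b1 b2).trans (le_of_eq ?_))
    field_simp
    ring
  have hkey := vertical_shift hab hfc hfd hbound hva.1 hvb.1
  rw [hva.2, hvb.2, if_pos (by linarith), if_neg (by linarith)] at hkey
  linear_combination hkey

/-! ### The translated Mellin–Barnes kernels -/

lemma norm_Gamma_le_of_strip {α β : ℝ} (hα : 0 < α) :
    ∃ C : ℝ, ∀ s : ℂ, α ≤ s.re → s.re ≤ β → ‖Complex.Gamma s‖ ≤ C := by
  obtain ⟨C, hC⟩ := (isCompact_Icc (a := α) (b := β)).exists_bound_of_continuousOn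
    (f := Real.Gamma) (Real.differentiableOn_Gamma_Ioi.continuousOn.mono
      fun x hx => hα.trans_le hx.1)
  refine ⟨C, fun s h1 h2 => ?_⟩
  have hs : 0 < s.re := hα.trans_le h1
  refine le_trans ?_ ((le_abs_self _).trans (hC s.re ⟨h1, h2⟩))
  rw [Complex.Gamma_eq_integral hs, Complex.GammaIntegral, Real.Gamma_eq_integral hs]
  refine (MeasureTheory.norm_integral_le_integral_norm _).trans (le_of_eq ?_)
  refine setIntegral_congr_fun measurableSet_Ioi fun x hx => ?_
  simp only [norm_mul]
  rw [Complex.norm_cpow_eq_rpow_re_of_pos hx, Complex.norm_real, Real.norm_eq_abs, Real.abs_exp]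
  simp

/-- Quadratic decay of `Γ` in vertical strips of the right half-plane, read off from the boundedness
of `Γ (s + 2) = s (s + 1) Γ s`. This weak form of Stirling's formula is all that is needed. -/
lemma norm_Gamma_mul_le_of_strip {α β : ℝ} (hα : 0 < α) :
    ∃ C : ℝ, ∀ s : ℂ, α ≤ s.re → s.re ≤ β → ‖Complex.Gamma s‖ * (1 + s.im ^ 2) ≤ C := by
  obtain ⟨C, hC⟩ := norm_Gamma_le_of_strip (α := α) (β := β) hα
  obtain ⟨C', hC'⟩ := norm_Gamma_le_of_strip (α := α) (β := β + 2) hα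
  refine ⟨C + C', fun s h1 h2 => ?_⟩
  have hs0 : s ≠ 0 := by rintro rfl; simp at h1; linarith
  have hs1 : s + 1 ≠ 0 := by
    intro h
    have := congrArg Complex.re h
    simp at this
    linarith
  have e : Complex.Gamma (s + 2) = (s + 1) * (s * Complex.Gamma s) := by
    rw [← Complex.Gamma_add_one s hs0, ← Complex.Gamma_add_one _ hs1]
    ring_nf
  have h3 := hC' (s + 2) (by simp; linarith) (by simpa using h2)
  rw [e, norm_mul, norm_mul] at h3
  have i1 : |s.im| ≤ ‖s + 1‖ := by simpa using Complex.abs_im_le_norm (s + 1)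
  have i2 : |s.im| ≤ ‖s‖ := Complex.abs_im_le_norm s
  have i3 : s.im ^ 2 ≤ ‖s + 1‖ * ‖s‖ := by
    rw [← sq_abs, sq]
    exact mul_le_mul i1 i2 (abs_nonneg _) (norm_nonneg _)
  have := hC s h1 h2
  nlinarith [mul_le_mul_of_nonneg_right i3 (norm_nonneg (Complex.Gamma s))]

lemma differentiableAt_Gamma_of_re_pos {s : ℂ} (hs : 0 < s.re) :
    DifferentiableAt ℂ Complex.Gamma s := by
  refine Complex.differentiableAt_Gamma s fun m h => ?_
  have := congrArg Complex.re h
  simp at this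
  linarith [(Nat.cast_nonneg m : (0 : ℝ) ≤ m)]

/-- The product `(w - 1)(w - 2)⋯(w - N)`, which equals `Γ(w) / Γ(w - N)` away from the poles. -/
noncomputable def gammaShift (N : ℕ) (w : ℂ) : ℂ := ∏ j ∈ Finset.range N, (w - 1 - j)

lemma gammaShift_succ' (N : ℕ) (w : ℂ) :
    gammaShift (N + 1) w = gammaShift N (w - 1) * (w - 1) := by
  unfold gammaShift
  rw [Finset.prod_range_succ']
  congr 1
  · refine Finset.prod_congr rfl fun j _ => ?_
    push_cast
    ring
  · simp

lemma le_norm_gammaShift {δ : ℝ} (hδ : 0 < δ) (N : ℕ) {w : ℂ} (hw : w.re ≤ 1 - δ) :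
    δ ^ N ≤ ‖gammaShift N w‖ := by
  unfold gammaShift
  rw [norm_prod]
  conv_lhs => rw [← Finset.card_range N, ← Finset.prod_const]
  refine Finset.prod_le_prod (fun _ _ => hδ.le) fun j _ => ?_
  have := Complex.abs_re_le_norm (w - 1 - j)
  have h2 := neg_abs_le (w - 1 - j).re
  simp at this h2
  have : (0 : ℝ) ≤ j := Nat.cast_nonneg j
  linarith

lemma gammaShift_ne_zero {N : ℕ} {w : ℂ} (hw : w.re < 1) : gammaShift N w ≠ 0 :=
  norm_pos_iff.1 ((pow_pos (sub_pos.2 hw) N).trans_le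
    (le_norm_gammaShift (sub_pos.2 hw) N (by linarith)))

lemma differentiable_gammaShift (N : ℕ) : Differentiable ℂ (gammaShift N) := by
  unfold gammaShift
  fun_prop

/-- The Mellin–Barnes integrand translated by `-2N`, multiplied by `s (s - 2ν) (s + 2ν) / 8` so as
to remove its three poles `0, ± 2ν` in the strip `γ - 2 ≤ Re s ≤ γ`. -/
noncomputable def mbNum (ν : ℂ) (y : ℝ) (N : ℕ) (s : ℂ) : ℂ :=
  Complex.Gamma ((1 - s) / 2 + N) * Complex.Gamma (s / 2 + 1) * Complex.Gamma (s / 2 + 1 - ν) *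
    Complex.Gamma (s / 2 + 1 + ν) * (y : ℂ) ^ (2 * (N : ℂ) - s) /
    (gammaShift N (s / 2) * gammaShift N (s / 2 - ν) * gammaShift N (s / 2 + ν))

/-- The Mellin–Barnes integrand translated by `-2N`, i.e. `h (s - 2N) * y ^ (2N - s)` with
`h s = Γ((1 - s)/2) Γ(s/2) Γ(s/2 - ν) Γ(s/2 + ν)`. -/
noncomputable def mbKer (ν : ℂ) (y : ℝ) (N : ℕ) (s : ℂ) : ℂ :=
  8 * mbNum ν y N s / (s * (s - 2 * ν) * (s + 2 * ν))

section Strip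

variable {ν : ℂ} {y γ : ℝ}

lemma differentiableAt_mbNum (hy : 0 < y) (hν₁ : 0 < ν.re)
    (hγ₁ : 2 * ν.re < γ) (hγ₂ : γ < 1) (N : ℕ) {s : ℂ} (h1 : γ - 2 ≤ s.re) (h2 : s.re ≤ γ) :
    DifferentiableAt ℂ (mbNum ν y N) s := by
  have hN : (0 : ℝ) ≤ N := Nat.cast_nonneg N
  have hG : ∀ {f : ℂ → ℂ}, DifferentiableAt ℂ f s → 0 < (f s).re →
      DifferentiableAt ℂ (fun z => Complex.Gamma (f z)) s := fun hf hp =>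
    (differentiableAt_Gamma_of_re_pos hp).comp s hf
  have hD : ∀ {f : ℂ → ℂ}, DifferentiableAt ℂ f s →
      DifferentiableAt ℂ (fun z => gammaShift N (f z)) s := fun hf =>
    (differentiable_gammaShift N _).comp s hf
  unfold mbNum
  refine DifferentiableAt.div ?_ ?_ ?_
  · refine (((((hG (by fun_prop) ?_).mul (hG (by fun_prop) ?_)).mul (hG (by fun_prop) ?_)).mul
      (hG (by fun_prop) ?_)).mul ?_)
    · simp; linarith
    · simp; linarith
    · simp; linarith
    · simp; linarith
    · exact DifferentiableAt.const_cpow (by fun_prop) (Or.inl (by exact_mod_cast hy.ne'))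
  · exact ((hD (by fun_prop)).mul (hD (by fun_prop))).mul (hD (by fun_prop))
  · refine mul_ne_zero (mul_ne_zero (gammaShift_ne_zero ?_) (gammaShift_ne_zero ?_))
      (gammaShift_ne_zero ?_) <;> simp <;> linarith

/-- One Gamma factor supplies the quadratic decay, the other ones are merely bounded. -/
lemma norm_mbNum_le (hy : 0 < y) (hν₁ : 0 < ν.re)
    (hγ₁ : 2 * ν.re < γ) (hγ₂ : γ < 1) (N : ℕ) :
    ∃ C : ℝ, ∀ s : ℂ, γ - 2 ≤ s.re → s.re ≤ γ → ‖mbNum ν y N s‖ * (1 + s.im ^ 2) ≤ C := by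
  have hN : (0 : ℝ) ≤ N := Nat.cast_nonneg N
  obtain ⟨C₁, hC₁⟩ := norm_Gamma_le_of_strip (α := (1 - γ) / 2 + N) (β := (3 - γ) / 2 + N)
    (by linarith)
  obtain ⟨C₂, hC₂⟩ := norm_Gamma_mul_le_of_strip (α := γ / 2) (β := γ / 2 + 1) (by linarith)
  obtain ⟨C₃, hC₃⟩ := norm_Gamma_le_of_strip (α := γ / 2 - ν.re) (β := γ / 2 + 1) (by linarith)
  obtain ⟨C₄, hC₄⟩ := norm_Gamma_le_of_strip (α := γ / 2) (β := γ / 2 + 1 + ν.re) (by linarith)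
  obtain ⟨C₅, hC₅⟩ := (isCompact_Icc (a := γ - 2) (b := γ)).exists_bound_of_continuousOn
    (f := fun x : ℝ => y ^ (2 * N - x))
    (Continuous.continuousOn (Real.continuous_const_rpow hy.ne' |>.comp (by fun_prop)))
  have hδ : 0 < 1 - γ / 2 - ν.re := by linarith
  set δ := 1 - γ / 2 - ν.re with hδd
  refine ⟨C₁ * (4 * C₂) * C₃ * C₄ * C₅ / (δ ^ N * δ ^ N * δ ^ N), fun s h1 h2 => ?_⟩
  have k1 := hC₁ ((1 - s) / 2 + N) (by simp; linarith) (by simp; linarith)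
  have k2 := hC₂ (s / 2 + 1) (by simp; linarith) (by simp; linarith)
  have k3 := hC₃ (s / 2 + 1 - ν) (by simp; linarith) (by simp; linarith)
  have k4 := hC₄ (s / 2 + 1 + ν) (by simp; linarith) (by simp; linarith)
  have k5 := hC₅ s.re ⟨h1, h2⟩
  have hyn : ‖(y : ℂ) ^ (2 * (N : ℂ) - s)‖ ≤ C₅ := by
    rw [Complex.norm_cpow_eq_rpow_re_of_pos hy]
    refine le_trans (le_of_eq ?_) ((le_abs_self _).trans k5)
    simp
  have k2' : ‖Complex.Gamma (s / 2 + 1)‖ * (1 + s.im ^ 2) ≤ 4 * C₂ := by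
    have e : (s / 2 + 1).im = s.im / 2 := by simp
    rw [e] at k2
    nlinarith [norm_nonneg (Complex.Gamma (s / 2 + 1))]
  have d1 := le_norm_gammaShift hδ N (w := s / 2) (by simp; linarith)
  have d2 := le_norm_gammaShift hδ N (w := s / 2 - ν) (by simp; linarith)
  have d3 := le_norm_gammaShift hδ N (w := s / 2 + ν) (by simp; linarith)
  have hδN : 0 < δ ^ N := pow_pos hδ N
  unfold mbNum
  rw [norm_div, norm_mul, norm_mul, norm_mul, norm_mul, norm_mul, norm_mul, div_mul_eq_mul_div]
  rw [show ∀ p q r t u v : ℝ, p * q * r * t * u * v = p * (q * v) * r * t * u by intros; ring]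
  have n1 := (norm_nonneg _).trans k1
  have n2 : 0 ≤ 4 * C₂ := (by positivity : (0:ℝ) ≤ _).trans k2'
  have n3 := (norm_nonneg _).trans k3
  have n4 := (norm_nonneg _).trans k4
  have n5 := (norm_nonneg _).trans hyn
  gcongr

lemma mbKer_succ {N : ℕ} {s : ℂ} (g0 : s ≠ 0) (g1 : s - 2 * ν ≠ 0)
    (g2 : s + 2 * ν ≠ 0) :
    mbKer ν y N (s - 2) = mbKer ν y (N + 1) s := by
  have e0 : Complex.Gamma (s / 2 + 1) = s / 2 * Complex.Gamma (s / 2) :=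
    Complex.Gamma_add_one _ (div_ne_zero g0 two_ne_zero)
  have e1 : Complex.Gamma (s / 2 + 1 - ν) = (s - 2 * ν) / 2 * Complex.Gamma (s / 2 - ν) := by
    rw [← show s / 2 - ν = (s - 2 * ν) / 2 by ring, ← Complex.Gamma_add_one]
    · ring_nf
    · rw [show s / 2 - ν = (s - 2 * ν) / 2 by ring]; exact div_ne_zero g1 two_ne_zero
  have e2 : Complex.Gamma (s / 2 + 1 + ν) = (s + 2 * ν) / 2 * Complex.Gamma (s / 2 + ν) := by
    rw [← show s / 2 + ν = (s + 2 * ν) / 2 by ring, ← Complex.Gamma_add_one]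
    · ring_nf
    · rw [show s / 2 + ν = (s + 2 * ν) / 2 by ring]; exact div_ne_zero g2 two_ne_zero
  unfold mbKer mbNum
  rw [gammaShift_succ', gammaShift_succ', gammaShift_succ', e0, e1, e2]
  rw [show (1 - (s - 2)) / 2 + (N : ℂ) = (1 - s) / 2 + ((N + 1 : ℕ) : ℂ) by push_cast; ring,
    show (s - 2) / 2 + 1 = s / 2 by ring, show (2 * (N : ℂ) - (s - 2)) = 2 * ((N + 1 : ℕ) : ℂ) - s by
      push_cast; ring, show (s - 2) / 2 = s / 2 - 1 by ring,
    show s / 2 - 1 - ν = s / 2 - ν - 1 by ring, show s / 2 - 1 + ν = s / 2 + ν - 1 by ring,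
    show s - 2 = 2 * (s / 2 - 1) by ring, show 2 * (s / 2 - 1) - 2 * ν = 2 * (s / 2 - ν - 1) by ring,
    show 2 * (s / 2 - 1) + 2 * ν = 2 * (s / 2 + ν - 1) by ring]
  generalize Complex.Gamma (s / 2) = Γ₀, Complex.Gamma (s / 2 - ν) = Γ₁,
    Complex.Gamma (s / 2 + ν) = Γ₂, gammaShift N (s / 2 - 1) = D₀,
    gammaShift N (s / 2 - ν - 1) = D₁, gammaShift N (s / 2 + ν - 1) = D₂,
    (y : ℂ) ^ (2 * ((N + 1 : ℕ) : ℂ) - s) = Y,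
    Complex.Gamma ((1 - s) / 2 + ((N + 1 : ℕ) : ℂ)) = A
  rw [eq_div_iff (mul_ne_zero (mul_ne_zero g0 g1) g2)]
  simp only [div_eq_mul_inv, mul_inv]
  ring

lemma integral_lin_comb {f g h : ℝ → ℂ} (c d : ℂ) (hf : Integrable f) (hg : Integrable g)
    (hh : Integrable h) : ∫ τ : ℝ, (c * f τ + c * g τ - d * h τ) =
      c * (∫ τ : ℝ, f τ) + c * (∫ τ : ℝ, g τ) - d * ∫ τ : ℝ, h τ := by
  have h1 : ∫ τ : ℝ, (c * f τ + c * g τ - d * h τ) =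
      (∫ τ : ℝ, (c * f τ + c * g τ)) - ∫ τ : ℝ, d * h τ :=
    integral_sub ((hf.const_mul c).add (hg.const_mul c)) (hh.const_mul d)
  rw [h1, integral_add (hf.const_mul c) (hg.const_mul c)]
  simp only [MeasureTheory.integral_const_mul]

/-- Passing from the line `Re s = γ` to `Re s = γ - 2`, on which the kernel with index `N` is the
kernel with index `N + 1` on the original line, collects the residues at `2ν`, `-2ν` and `0`. -/
lemma mbKer_shift (hy : 0 < y) (hν₁ : 0 < ν.re)
    (hγ₁ : 2 * ν.re < γ) (hγ₂ : γ < 1) (N : ℕ) :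
    Integrable (fun τ : ℝ => mbKer ν y N (γ + τ * I)) ∧
    (∫ τ : ℝ, mbKer ν y N (γ + τ * I)) - ∫ τ : ℝ, mbKer ν y (N + 1) (γ + τ * I) =
      2 * Real.pi * (mbNum ν y N (2 * ν) / ν ^ 2 + mbNum ν y N (-2 * ν) / ν ^ 2 -
        2 * (mbNum ν y N 0 / ν ^ 2)) := by
  obtain ⟨C, hC⟩ := norm_mbNum_le hy hν₁ hγ₁ hγ₂ N
  have hd := fun s : ℂ => differentiableAt_mbNum (s := s) hy hν₁ hγ₁ hγ₂ N
  have p0 := vertical_shift_pole (p := 0) (a := γ - 2) (b := γ) (by simp; linarith)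
    (by simp; linarith) hd hC
  have p1 := vertical_shift_pole (p := 2 * ν) (a := γ - 2) (b := γ) (by simp; linarith)
    (by simp; linarith) hd hC
  have p2 := vertical_shift_pole (p := -2 * ν) (a := γ - 2) (b := γ) (by simp; linarith)
    (by simp; linarith) hd hC
  have hν0 : ν ≠ 0 := by rintro rfl; simp at hν₁
  have hre : ∀ {z : ℂ}, z.re ≠ 0 → z ≠ 0 := by rintro _ h rfl; simp at h
  -- partial fractions of `8 / (s (s - 2ν) (s + 2ν))`
  have hpf : ∀ s : ℂ, s ≠ 0 → s - 2 * ν ≠ 0 → s + 2 * ν ≠ 0 → mbKer ν y N s =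
      (ν ^ 2)⁻¹ * (mbNum ν y N s / (s - 2 * ν)) + (ν ^ 2)⁻¹ * (mbNum ν y N s / (s - -2 * ν)) -
        2 * (ν ^ 2)⁻¹ * (mbNum ν y N s / (s - 0)) := by
    intro s h0 h1 h2
    unfold mbKer
    rw [show s - -2 * ν = s + 2 * ν by ring, sub_zero]
    field_simp
    ring
  have hb : (fun τ : ℝ => mbKer ν y N (γ + τ * I)) = fun τ : ℝ =>
      (ν ^ 2)⁻¹ * (mbNum ν y N (γ + τ * I) / (γ + τ * I - 2 * ν)) +
      (ν ^ 2)⁻¹ * (mbNum ν y N (γ + τ * I) / (γ + τ * I - -2 * ν)) -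
        2 * (ν ^ 2)⁻¹ * (mbNum ν y N (γ + τ * I) / (γ + τ * I - 0)) := by
    ext τ
    refine hpf _ (hre ?_) (hre ?_) (hre ?_) <;> simp <;> linarith
  have ha : (fun τ : ℝ => mbKer ν y (N + 1) (γ + τ * I)) = fun τ : ℝ =>
      (ν ^ 2)⁻¹ * (mbNum ν y N ((γ - 2 : ℝ) + τ * I) / ((γ - 2 : ℝ) + τ * I - 2 * ν)) +
      (ν ^ 2)⁻¹ * (mbNum ν y N ((γ - 2 : ℝ) + τ * I) / ((γ - 2 : ℝ) + τ * I - -2 * ν)) -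
        2 * (ν ^ 2)⁻¹ * (mbNum ν y N ((γ - 2 : ℝ) + τ * I) / ((γ - 2 : ℝ) + τ * I - 0)) := by
    ext τ
    rw [← hpf, ← mbKer_succ]
    · congr 1; push_cast; ring
    all_goals refine hre ?_
    all_goals simp
    all_goals intro h; linarith
  constructor
  · rw [hb]
    exact ((p1.2.1.const_mul _).add (p2.2.1.const_mul _)).sub (p0.2.1.const_mul _)
  · rw [hb, ha, integral_lin_comb _ _ p1.2.1 p2.2.1 p0.2.1, integral_lin_comb _ _ p1.1 p2.1 p0.1]
    linear_combination (ν ^ 2)⁻¹ * p1.2.2 + (ν ^ 2)⁻¹ * p2.2.2 - 2 * (ν ^ 2)⁻¹ * p0.2.2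

/-! ### Sum over all residues -/

/-- Translating by `-2` multiplies the kernel by a rational factor of size `O(1 / N)`. The factor
`(1 - s) / 2 + N` coming from the numerator is absorbed by one of the three denominators. -/
lemma norm_mbKer_succ_le (hy : 0 < y) (hν₁ : 0 < ν.re) (hγ₁ : 2 * ν.re < γ) (hγ₂ : γ < 1) (N : ℕ)
    {s : ℂ} (hs : s.re = γ) :
    ‖mbKer ν y (N + 1) s‖ ≤ 4 * y ^ 2 / (N + (1 - γ / 2 - ν.re)) * ‖mbKer ν y N s‖ := by
  have hN : (0 : ℝ) ≤ N := Nat.cast_nonneg N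
  have hyc : (y : ℂ) ≠ 0 := by exact_mod_cast hy.ne'
  have hre : ∀ z : ℂ, -z.re ≤ ‖z‖ := fun z => (neg_le_abs _).trans (Complex.abs_re_le_norm z)
  have b1 : 1 / 2 ≤ ‖s / 2 - 1 - N‖ := by
    refine le_trans ?_ (hre _); simp; linarith
  have b2 : 1 / 2 ≤ ‖s / 2 - ν - 1 - N‖ := by
    refine le_trans ?_ (hre _); simp; linarith
  have b3 : N + (1 - γ / 2 - ν.re) ≤ ‖s / 2 + ν - 1 - N‖ := by
    refine le_trans ?_ (hre _); simp; linarith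
  have b4 : ‖(1 - s) / 2 + N‖ ≤ 2 * ‖s / 2 - 1 - N‖ := by
    have : (1 - s) / 2 + N = -(s / 2 - 1 - N) - 1 / 2 := by ring
    rw [this]
    refine (norm_sub_le _ _).trans ?_
    rw [norm_neg]
    norm_num
    linarith
  have hA : (1 - s) / 2 + N ≠ 0 := by
    intro h
    have := congrArg Complex.re h
    simp at this
    linarith
  have hfac : mbKer ν y (N + 1) s = ((y : ℂ) ^ 2 * ((1 - s) / 2 + N) /
      ((s / 2 - 1 - N) * (s / 2 - ν - 1 - N) * (s / 2 + ν - 1 - N))) * mbKer ν y N s := by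
    have e1 : Complex.Gamma ((1 - s) / 2 + ((N + 1 : ℕ) : ℂ)) =
        ((1 - s) / 2 + N) * Complex.Gamma ((1 - s) / 2 + N) := by
      rw [← Complex.Gamma_add_one _ hA]; push_cast; ring_nf
    have e2 : (y : ℂ) ^ (2 * ((N + 1 : ℕ) : ℂ) - s) =
        (y : ℂ) ^ 2 * (y : ℂ) ^ (2 * (N : ℂ) - s) := by
      rw [← Complex.cpow_two, ← Complex.cpow_add _ _ hyc]; push_cast; ring_nf
    have e3 : ∀ w, gammaShift (N + 1) w = gammaShift N w * (w - 1 - N) := fun w => by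
      unfold gammaShift; rw [Finset.prod_range_succ]
    unfold mbKer mbNum
    rw [e1, e2, e3, e3, e3]
    simp only [div_eq_mul_inv, mul_inv]
    ring
  rw [hfac, norm_mul]
  refine mul_le_mul_of_nonneg_right ?_ (norm_nonneg _)
  rw [norm_div, norm_mul, norm_mul, norm_mul, norm_pow, Complex.norm_real, Real.norm_eq_abs, sq_abs]
  have hδ : 0 < N + (1 - γ / 2 - ν.re) := by linarith
  have p1 : 0 < ‖s / 2 - 1 - N‖ := by linarith
  have p2 : 0 < ‖s / 2 - ν - 1 - N‖ := by linarith
  have p3 : 0 < ‖s / 2 + ν - 1 - N‖ := by linarith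
  calc y ^ 2 * ‖(1 - s) / 2 + N‖ / (‖s / 2 - 1 - N‖ * ‖s / 2 - ν - 1 - N‖ * ‖s / 2 + ν - 1 - N‖)
      ≤ y ^ 2 * (2 * ‖s / 2 - 1 - N‖) /
        (‖s / 2 - 1 - N‖ * (1 / 2) * (N + (1 - γ / 2 - ν.re))) := by gcongr
    _ = 4 * y ^ 2 / (N + (1 - γ / 2 - ν.re)) := by
      rw [div_eq_div_iff (by positivity) hδ.ne']; ring

lemma tendsto_integral_mbKer (hy : 0 < y) (hν₁ : 0 < ν.re) (hγ₁ : 2 * ν.re < γ) (hγ₂ : γ < 1) :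
    Tendsto (fun N : ℕ => ∫ τ : ℝ, mbKer ν y N (γ + τ * I)) atTop (𝓝 0) := by
  set δ := 1 - γ / 2 - ν.re with hδ
  have hδ0 : 0 < δ := by linarith
  set c : ℕ → ℝ := fun N => ∏ j ∈ Finset.range N, 4 * y ^ 2 / (j + δ) with hc
  have hcpos : ∀ N, 0 < c N := fun N => Finset.prod_pos fun j _ => by positivity
  have hcs : ∀ N, c (N + 1) = 4 * y ^ 2 / (N + δ) * c N := fun N => by
    simp only [hc]; rw [Finset.prod_range_succ, mul_comm]
  have hc0 : Tendsto c atTop (𝓝 0) := by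
    refine (summable_of_ratio_test_tendsto_lt_one (l := 0) one_pos
      (Eventually.of_forall fun N => (hcpos N).ne') ?_).tendsto_atTop_zero
    have : (fun N : ℕ => ‖c (N + 1)‖ / ‖c N‖) = fun N : ℕ => 4 * y ^ 2 / ((N : ℝ) + δ) := by
      ext N
      rw [Real.norm_of_nonneg (hcpos _).le, Real.norm_of_nonneg (hcpos _).le, hcs,
        mul_div_cancel_right₀ _ (hcpos N).ne']
    rw [this]
    exact tendsto_const_nhds.div_atTop
      (tendsto_atTop_add_const_right _ _ tendsto_natCast_atTop_atTop)
  have hle : ∀ (N : ℕ) (τ : ℝ), ‖mbKer ν y N (γ + τ * I)‖ ≤ c N * ‖mbKer ν y 0 (γ + τ * I)‖ := by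
    intro N τ
    induction N with
    | zero => simp [hc]
    | succ N ih =>
      refine (norm_mbKer_succ_le hy hν₁ hγ₁ hγ₂ N (by simp)).trans ?_
      rw [hcs, mul_assoc]
      exact mul_le_mul_of_nonneg_left ih (by positivity)
  have hint := (mbKer_shift hy hν₁ hγ₁ hγ₂ 0).1.norm
  refine squeeze_zero_norm (a := fun N => c N * ∫ τ : ℝ, ‖mbKer ν y 0 (γ + τ * I)‖) (fun N => ?_)
    (by simpa using hc0.mul_const _)
  rw [← MeasureTheory.integral_const_mul]
  exact norm_integral_le_of_norm_le (hint.const_mul _) (ae_of_all _ (hle N))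

/-- The Mellin–Barnes integral is the sum of the residues at all poles left of the contour. -/
lemma tendsto_sum_residues (hy : 0 < y) (hν₁ : 0 < ν.re) (hγ₁ : 2 * ν.re < γ) (hγ₂ : γ < 1) :
    Tendsto (fun n : ℕ => ∑ N ∈ Finset.range n, 2 * Real.pi * (mbNum ν y N (2 * ν) / ν ^ 2 +
      mbNum ν y N (-2 * ν) / ν ^ 2 - 2 * (mbNum ν y N 0 / ν ^ 2))) atTop
      (𝓝 (∫ τ : ℝ, mbKer ν y 0 (γ + τ * I))) := by
  have h : ∀ n : ℕ, ∑ N ∈ Finset.range n, 2 * Real.pi * (mbNum ν y N (2 * ν) / ν ^ 2 +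
      mbNum ν y N (-2 * ν) / ν ^ 2 - 2 * (mbNum ν y N 0 / ν ^ 2)) =
      (∫ τ : ℝ, mbKer ν y 0 (γ + τ * I)) - ∫ τ : ℝ, mbKer ν y n (γ + τ * I) := by
    intro n
    simp only [← (mbKer_shift hy hν₁ hγ₁ hγ₂ _).2]
    exact Finset.sum_range_sub' _ n
  simp only [h]
  simpa using tendsto_const_nhds.sub (tendsto_integral_mbKer hy hν₁ hγ₁ hγ₂)

end Strip

/-! ### Bessel series and their Cauchy products -/

lemma hasSum_of_forall_eq {f g : ℕ → ℂ} {c : ℂ} (hg : HasSum g c) (h : ∀ n, f n = g n) :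
    HasSum f c :=
  (funext h : f = g) ▸ hg

/-- The product `(w + 1)(w + 2)⋯(w + N) = Γ(w + 1 + N) / Γ(w + 1)`, i.e. the Pochhammer symbol
`(w + 1)_N`. -/
noncomputable def rise (N : ℕ) (w : ℂ) : ℂ := ∏ j ∈ Finset.range N, (w + 1 + j)

lemma rise_succ (N : ℕ) (w : ℂ) : rise (N + 1) w = rise N w * (w + 1 + N) :=
  Finset.prod_range_succ _ _

lemma rise_zero_right (N : ℕ) : rise N 0 = (N.factorial : ℂ) := by
  unfold rise
  rw [← Finset.prod_range_add_one_eq_factorial]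
  push_cast
  exact Finset.prod_congr rfl fun j _ => by ring

lemma rise_add (i j : ℕ) (w : ℂ) : rise (i + j) w = rise j w * rise i (w + j) := by
  unfold rise
  rw [add_comm i j, Finset.prod_range_add]
  congr 1
  exact Finset.prod_congr rfl fun k _ => by push_cast; ring

lemma gammaShift_eq_rise (N : ℕ) (w : ℂ) : gammaShift N w = (-1) ^ N * rise N (-w) := by
  unfold gammaShift rise
  conv_rhs => enter [1]; rw [← Finset.card_range N, ← Finset.prod_const]
  rw [← Finset.prod_mul_distrib]
  exact Finset.prod_congr rfl fun k _ => by ring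

lemma half_pow_le_norm_rise {w : ℂ} (hw : -(1 / 2) < w.re) (N : ℕ) :
    (1 / 2) ^ N ≤ ‖rise N w‖ := by
  have h := le_norm_gammaShift (δ := 1 / 2) (by norm_num) N (w := -w) (by simp; linarith)
  rw [gammaShift_eq_rise] at h
  simpa using h

lemma rise_ne_zero {w : ℂ} (hw : -1 < w.re) (N : ℕ) : rise N w ≠ 0 := by
  have h := gammaShift_ne_zero (N := N) (w := -w) (by simp; linarith)
  rw [gammaShift_eq_rise, neg_neg] at h
  exact right_ne_zero_of_mul h

lemma Gamma_add_nat {w : ℂ} (hw : -1 < w.re) (N : ℕ) :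
    Complex.Gamma (w + 1 + N) = Complex.Gamma (w + 1) * rise N w := by
  induction N with
  | zero => simp [rise]
  | succ N ih =>
    have h0 : w + 1 + N ≠ 0 := by
      intro h
      have := congrArg Complex.re h
      simp at this
      linarith [(Nat.cast_nonneg N : (0 : ℝ) ≤ N)]
    rw [rise_succ, ← mul_assoc, ← ih, mul_comm, ← Complex.Gamma_add_one _ h0]
    push_cast
    ring_nf

/-- Falling factorials are rising factorials read backwards; this gives access to the
Chu–Vandermonde identity `Ring.descPochhammer_smeval_add`. -/
lemma descPochhammer_smeval_eq_rise (i : ℕ) (w : ℂ) :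
    (descPochhammer ℤ i).smeval (w + i) = rise i w := by
  have h : ∀ r : ℂ, (descPochhammer ℤ i).smeval r = ∏ k ∈ Finset.range i, (r - k) := by
    intro r
    induction i with
    | zero => simp
    | succ n ih =>
      rw [descPochhammer_succ_right, Polynomial.smeval_mul, ih, Polynomial.smeval_sub,
        Polynomial.smeval_X, Polynomial.smeval_natCast, pow_zero, pow_one, Finset.prod_range_succ]
      simp
  rw [h, ← Finset.prod_range_reflect]
  refine Finset.prod_congr rfl fun k hk => ?_
  have hk' : k + 1 ≤ i := Finset.mem_range.1 hk
  rw [Nat.sub_sub, add_comm 1 k, Nat.cast_sub hk']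
  push_cast
  ring

/-- Chu–Vandermonde in the form needed for the Cauchy product of two Bessel series. -/
lemma rise_vandermonde (N : ℕ) (μ κ : ℂ) :
    rise N (μ + κ + N) = ∑ ij ∈ Finset.HasAntidiagonal.antidiagonal N,
      (N.choose ij.1 : ℂ) * (rise ij.1 (μ + ij.2) * rise ij.2 (κ + ij.1)) := by
  have h := Ring.descPochhammer_smeval_add (r := μ + N) (s := κ + N) N (Commute.all _ _)
  rw [show μ + N + (κ + N) = (μ + κ + N) + (N : ℂ) by ring, descPochhammer_smeval_eq_rise] at h
  rw [h]
  refine Finset.sum_congr rfl fun ij hij => ?_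
  have hN : (N : ℂ) = ij.1 + ij.2 := by
    rw [← Finset.HasAntidiagonal.mem_antidiagonal.1 hij]; push_cast; rfl
  rw [← descPochhammer_smeval_eq_rise, ← descPochhammer_smeval_eq_rise, hN]
  ring_nf

/-- The finite form of Legendre's duplication formula. -/
lemma rise_duplication (N : ℕ) (w : ℂ) :
    rise N (2 * w + N) * rise N (2 * w) = 4 ^ N * (rise N w * rise N (w - 1 / 2)) := by
  rw [mul_comm, ← rise_add]
  induction N with
  | zero => simp [rise]
  | succ N ih =>
    rw [show N + 1 + (N + 1) = N + N + 1 + 1 by ring, rise_succ, rise_succ, ih, rise_succ, rise_succ]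
    push_cast
    ring

/-- The `n`-th term of the Bessel series of order `μ`, normalised so that the term `n = 0` is `1`. -/
noncomputable def besselTerm (y : ℝ) (μ : ℂ) (n : ℕ) : ℂ :=
  (-1) ^ n * ((y : ℂ) / 2) ^ (2 * n) / (n.factorial * rise n μ)

section Bessel

variable {y : ℝ} {μ κ ν : ℂ}

lemma besselJ_eq (hy : 0 < y) (hμ : -1 < μ.re) :
    besselJ μ y = ((y : ℂ) / 2) ^ μ * (Complex.Gamma (μ + 1))⁻¹ * ∑' n, besselTerm y μ n := by
  have hy2 : (y : ℂ) / 2 ≠ 0 := div_ne_zero (by exact_mod_cast hy.ne') two_ne_zero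
  unfold besselJ
  rw [← tsum_mul_left]
  refine tsum_congr fun n => ?_
  rw [Complex.cpow_add _ _ hy2, show (2 * (n : ℂ)) = ((2 * n : ℕ) : ℂ) by push_cast; rfl,
    Complex.cpow_natCast, Complex.Gamma_nat_eq_factorial,
    show (n : ℂ) + μ + 1 = μ + 1 + n by ring, Gamma_add_nat hμ, besselTerm]
  simp only [div_eq_mul_inv, mul_inv]
  ring

lemma norm_besselTerm_le (hμ : -(1 / 2) < μ.re) (n : ℕ) :
    ‖besselTerm y μ n‖ ≤ (2 * (y / 2) ^ 2) ^ n / n.factorial := by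
  have h := half_pow_le_norm_rise hμ n
  unfold besselTerm
  rw [norm_div, norm_mul, norm_mul, norm_pow, norm_neg, norm_one, one_pow, one_mul, norm_pow,
    norm_div, Complex.norm_real, Complex.norm_ofNat, Complex.norm_natCast, Real.norm_eq_abs,
    pow_mul, div_pow, sq_abs]
  calc (y ^ 2 / 2 ^ 2) ^ n / (n.factorial * ‖rise n μ‖)
      ≤ (y ^ 2 / 2 ^ 2) ^ n / (n.factorial * (1 / 2) ^ n) := by gcongr
    _ = (2 * (y / 2) ^ 2) ^ n / n.factorial := by
      rw [mul_pow, div_pow y 2 2, one_div, inv_pow]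
      field_simp

lemma summable_norm_besselTerm (hμ : -(1 / 2) < μ.re) : Summable fun n => ‖besselTerm y μ n‖ :=
  (Real.summable_pow_div_factorial _).of_nonneg_of_le (fun _ => norm_nonneg _)
    (norm_besselTerm_le hμ)

/-- `J_κ(y)` is continuous in the order `κ`, by uniform convergence of the normalised series. -/
lemma continuousAt_besselJ (hy : 0 < y) (hμ : -(1 / 2) < μ.re) :
    ContinuousAt (fun κ => besselJ κ y) μ := by
  have hy2 : (y : ℂ) / 2 ≠ 0 := div_ne_zero (by exact_mod_cast hy.ne') two_ne_zero
  have hopen : IsOpen {κ : ℂ | -(1 / 2) < κ.re} := isOpen_lt continuous_const Complex.continuous_re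
  have hnhds := hopen.mem_nhds hμ
  have hsum : ContinuousOn (fun κ => ∑' n, besselTerm y κ n) {κ : ℂ | -(1 / 2) < κ.re} := by
    refine continuousOn_tsum (fun n => ?_) (Real.summable_pow_div_factorial _)
      (fun n κ hκ => norm_besselTerm_le hκ n)
    unfold besselTerm
    refine continuousOn_const.div (continuousOn_const.mul ?_) fun κ hκ => ?_
    · unfold rise; fun_prop
    · refine mul_ne_zero (by exact_mod_cast n.factorial_ne_zero) (rise_ne_zero ?_ n)
      have : -(1 / 2) < κ.re := hκ
      linarith
  have h2 : ContinuousAt (fun κ => ((y : ℂ) / 2) ^ κ * (Complex.Gamma (κ + 1))⁻¹ *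
      ∑' n, besselTerm y κ n) μ := by
    refine ContinuousAt.mul (ContinuousAt.mul ?_ ?_) (hsum.continuousAt hnhds)
    · exact continuousAt_id.const_cpow (Or.inl hy2)
    · exact (Complex.differentiable_one_div_Gamma.continuous.comp
        (continuous_id.add continuous_const)).continuousAt
  refine h2.congr ?_
  filter_upwards [hnhds] with κ hκ
  have : -(1 / 2) < κ.re := hκ
  exact (besselJ_eq hy (by linarith)).symm

/-- For non-integer order the limit defining `Y_ν` is evaluated by continuity in the order. -/
lemma besselY_eq (hy : 0 < y) (h1 : -(1 / 2) < ν.re) (h2 : ν.re < 1 / 2)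
    (hsin : Complex.sin (Real.pi * ν) ≠ 0) :
    besselY ν y = (besselJ ν y * Complex.cos (Real.pi * ν) - besselJ (-ν) y) /
      Complex.sin (Real.pi * ν) := by
  unfold besselY
  refine Tendsto.limUnder_eq (Tendsto.mono_left ?_ nhdsWithin_le_nhds)
  have hneg : ContinuousAt (fun κ => besselJ (-κ) y) ν :=
    ContinuousAt.comp (f := fun κ : ℂ => -κ) (g := fun κ => besselJ κ y)
      (continuousAt_besselJ hy (by simp; linarith)) continuous_neg.continuousAt
  exact (((continuousAt_besselJ hy h1).mul (by fun_prop)).sub hneg).div (by fun_prop) hsin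

/-- The Cauchy product of two Bessel series. -/
lemma hasSum_besselTerm_mul (hμ : -(1 / 2) < μ.re) (hκ : -(1 / 2) < κ.re) {w : ℂ}
    (hw : μ + κ = 2 * w) :
    HasSum (fun N : ℕ => (-1) ^ N * (y : ℂ) ^ (2 * N) * (rise N w * rise N (w - 1 / 2)) /
      (N.factorial * rise N μ * rise N κ * rise N (2 * w)))
      ((∑' n, besselTerm y μ n) * ∑' n, besselTerm y κ n) := by
  have sμ := summable_norm_besselTerm (y := y) hμ
  have sκ := summable_norm_besselTerm (y := y) hκ
  rw [tsum_mul_tsum_eq_tsum_sum_antidiagonal_of_summable_norm sμ sκ]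
  have hs := (summable_norm_sum_mul_antidiagonal_of_summable_norm sμ sκ).of_norm
  refine hasSum_of_forall_eq hs.hasSum fun N => ?_
  have hw1 : -1 < (2 * w).re := by rw [← hw]; simp; linarith
  have e1 := rise_ne_zero (by linarith : -1 < μ.re)
  have e2 := rise_ne_zero (by linarith : -1 < κ.re)
  have e3 := rise_ne_zero hw1 N
  have e4 : ∀ n : ℕ, (n.factorial : ℂ) ≠ 0 := fun n => by exact_mod_cast n.factorial_ne_zero
  have hterm : ∀ ij ∈ Finset.HasAntidiagonal.antidiagonal N, besselTerm y μ ij.1 * besselTerm y κ ij.2 =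
      (-1) ^ N * ((y : ℂ) / 2) ^ (2 * N) / (N.factorial * rise N μ * rise N κ) *
        ((N.choose ij.2 : ℂ) * (rise ij.2 (μ + ij.1) * rise ij.1 (κ + ij.2))) := by
    intro ij hij
    obtain ⟨i, j⟩ := ij
    obtain rfl : i + j = N := Finset.HasAntidiagonal.mem_antidiagonal.1 hij
    have hch : ((i + j).choose j : ℂ) * (i.factorial * j.factorial) = (i + j).factorial := by
      rw [← Nat.add_choose_mul_factorial_mul_factorial i j]; push_cast; ring
    have r1 : rise (i + j) μ = rise i μ * rise j (μ + i) := by rw [add_comm i j, rise_add]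
    have r2 : rise (i + j) κ = rise j κ * rise i (κ + j) := rise_add i j κ
    have n1 : rise j (μ + i) ≠ 0 := right_ne_zero_of_mul (r1 ▸ e1 (i + j))
    have n2 : rise i (κ + j) ≠ 0 := right_ne_zero_of_mul (r2 ▸ e2 (i + j))
    simp only [besselTerm]
    rw [r1, r2, div_mul_div_comm, div_mul_eq_mul_div, div_eq_div_iff
      (mul_ne_zero (mul_ne_zero (e4 i) (e1 i)) (mul_ne_zero (e4 j) (e2 j)))
      (mul_ne_zero (mul_ne_zero (e4 _) (mul_ne_zero (e1 i) n1)) (mul_ne_zero (e2 j) n2)),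
      ← hch, mul_add 2 i j, pow_add, pow_add]
    ring
  rw [Finset.sum_congr rfl hterm, ← Finset.mul_sum, ← Finset.Nat.sum_antidiagonal_swap]
  have hv := rise_vandermonde N μ κ
  simp only [Prod.swap]
  rw [← hv, hw]
  have hd := rise_duplication N w
  have e5 : rise N (2 * w + N) = 4 ^ N * (rise N w * rise N (w - 1 / 2)) / rise N (2 * w) := by
    rw [← hd, mul_div_cancel_right₀ _ e3]
  rw [e5, pow_mul ((y : ℂ) / 2), div_pow, div_pow, pow_mul (y : ℂ)]
  norm_num
  have e6 : (4 : ℂ) ^ N ≠ 0 := pow_ne_zero _ (by norm_num)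
  have := e1 N
  have := e2 N
  have := e4 N
  field_simp

/-- Summing the residues at the poles `-2w - 2N`, `N ≥ 0`, gives a product of two Bessel
functions. Here `(w, μ, κ)` is one of `(ν, ν, ν)`, `(-ν, -ν, -ν)`, `(0, ν, -ν)`. -/
lemma hasSum_mbNum (hy : 0 < y) (hμ : -(1 / 2) < μ.re) (hκ : -(1 / 2) < κ.re) {w : ℂ}
    (hw : μ + κ = 2 * w)
    (hr : ∀ N, rise N w * (rise N w * rise N (w + ν) * rise N (w - ν)) =
      N.factorial * rise N μ * rise N κ * rise N (2 * w)) :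
    HasSum (fun N : ℕ => mbNum ν y N (-2 * w))
      (Complex.Gamma (w + 1 / 2) * Complex.Gamma (1 - w) * Complex.Gamma (1 - w - ν) *
        Complex.Gamma (1 - w + ν) * Complex.Gamma (μ + 1) * Complex.Gamma (κ + 1) * 2 ^ (2 * w) *
        (besselJ μ y * besselJ κ y)) := by
  have hyc : (y : ℂ) ≠ 0 := by exact_mod_cast hy.ne'
  have hy2 : (y : ℂ) / 2 ≠ 0 := div_ne_zero hyc two_ne_zero
  have hwre : -(1 / 2) < w.re := by
    have := congrArg Complex.re hw
    simp at this
    linarith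
  have hG : ∀ {z : ℂ}, -(1 / 2) < z.re → Complex.Gamma (z + 1) ≠ 0 := fun {z} hz =>
    Complex.Gamma_ne_zero_of_re_pos (by simp; linarith)
  have hpow : (y : ℂ) ^ (2 * w) = 2 ^ (2 * w) * (((y : ℂ) / 2) ^ μ * ((y : ℂ) / 2) ^ κ) := by
    rw [← Complex.cpow_add _ _ hy2, hw]
    have := Complex.mul_cpow_ofReal_nonneg (a := 2) (b := y / 2) (by norm_num) (by positivity) (2 * w)
    push_cast at this
    rw [← this]
    congr 1
    ring
  have h := (hasSum_besselTerm_mul (y := y) hμ hκ hw).mul_left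
    (Complex.Gamma (w + 1 / 2) * Complex.Gamma (1 - w) * Complex.Gamma (1 - w - ν) *
        Complex.Gamma (1 - w + ν) * (y : ℂ) ^ (2 * w))
  have hval : Complex.Gamma (w + 1 / 2) * Complex.Gamma (1 - w) * Complex.Gamma (1 - w - ν) *
        Complex.Gamma (1 - w + ν) * Complex.Gamma (μ + 1) * Complex.Gamma (κ + 1) * 2 ^ (2 * w) *
        (besselJ μ y * besselJ κ y) =
      Complex.Gamma (w + 1 / 2) * Complex.Gamma (1 - w) * Complex.Gamma (1 - w - ν) *
        Complex.Gamma (1 - w + ν) * (y : ℂ) ^ (2 * w) *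
        ((∑' n, besselTerm y μ n) * ∑' n, besselTerm y κ n) := by
    rw [besselJ_eq hy (by linarith : -1 < μ.re), besselJ_eq hy (by linarith : -1 < κ.re), hpow]
    have := hG hμ
    have := hG hκ
    field_simp
  rw [hval]
  refine hasSum_of_forall_eq h fun N => ?_
  have e1 := rise_ne_zero (by linarith : -1 < w.re) N
  rw [← hr N, mul_assoc _ (rise N w) (rise N (w - 1 / 2)) |>.symm, mul_right_comm _ (rise N w),
    mul_comm (rise N w) (_ * _ * _), mul_div_mul_right _ _ e1]
  unfold mbNum
  simp only [gammaShift_eq_rise]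
  have g1 : Complex.Gamma ((1 - -2 * w) / 2 + N) =
      Complex.Gamma (w + 1 / 2) * rise N (w - 1 / 2) := by
    rw [show (1 - -2 * w) / 2 + (N : ℂ) = (w - 1 / 2) + 1 + N by ring,
      Gamma_add_nat (by norm_num; linarith)]
    ring_nf
  have g2 : (y : ℂ) ^ (2 * (N : ℂ) - -2 * w) = (y : ℂ) ^ (2 * w) * (y : ℂ) ^ (2 * N) := by
    rw [← Complex.cpow_natCast, ← Complex.cpow_add _ _ hyc]
    push_cast
    ring_nf
  rw [g1, g2, show -2 * w / 2 + 1 = 1 - w by ring, show -(-2 * w / 2) = w by ring,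
    show -(-2 * w / 2 - ν) = w + ν by ring, show -(-2 * w / 2 + ν) = w - ν by ring]
  have hsq : ((-1 : ℂ) ^ N)⁻¹ = (-1) ^ N := by rw [← inv_pow]; norm_num
  have hsq2 : ((-1 : ℂ) ^ N) * (-1) ^ N = 1 := by rw [← mul_pow]; norm_num
  simp only [div_eq_mul_inv, one_mul, mul_inv, hsq]
  linear_combination (Complex.Gamma (w + 2⁻¹) * rise N (w - 2⁻¹) * Complex.Gamma (1 - w) *
    Complex.Gamma (1 - w - ν) * Complex.Gamma (1 - w + ν) * (y : ℂ) ^ (2 * w) * (y : ℂ) ^ (2 * N) *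
    (rise N w)⁻¹ * (rise N (w + ν))⁻¹ * (rise N (w - ν))⁻¹ * (-1) ^ N) * hsq2

end Bessel

/-! ### Gamma constants and the final evaluation -/

/-- Reflection formula in the form `Γ(1 - z) Γ(1 + z) = π z / sin (π z)`. -/
lemma Gamma_one_sub_mul_Gamma_one_add {z : ℂ} (hz : z ≠ 0) :
    Complex.Gamma (1 - z) * Complex.Gamma (z + 1) = Real.pi * z / Complex.sin (Real.pi * z) := by
  rw [Complex.Gamma_add_one _ hz, mul_left_comm, mul_comm (Complex.Gamma (1 - z)),
    Complex.Gamma_mul_Gamma_one_sub, mul_div_assoc', mul_comm z]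

/-- The Gamma factors in the residue series at the poles `∓2ν - 2N`. -/
lemma Gamma_const_diag {ν : ℂ} (hν : ν ≠ 0) :
    Complex.Gamma (ν + 1 / 2) * Complex.Gamma (1 - ν) * Complex.Gamma (1 - ν - ν) *
      Complex.Gamma (1 - ν + ν) * Complex.Gamma (ν + 1) * Complex.Gamma (ν + 1) * 2 ^ (2 * ν) =
    2 * (Real.sqrt Real.pi : ℂ) * Real.pi ^ 2 * ν ^ 2 /
      (Complex.sin (Real.pi * ν) * Complex.sin (Real.pi * (2 * ν))) := by
  have h1 := Gamma_one_sub_mul_Gamma_one_add hν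
  have h2 := Gamma_one_sub_mul_Gamma_one_add (mul_ne_zero two_ne_zero hν)
  have h3 := Complex.Gamma_mul_Gamma_add_half (ν + 1 / 2)
  have h4 : (2 : ℂ) ^ (1 - 2 * (ν + 1 / 2)) * 2 ^ (2 * ν) = 1 := by
    rw [← Complex.cpow_add _ _ two_ne_zero, show 1 - 2 * (ν + 1 / 2) + 2 * ν = 0 by ring,
      Complex.cpow_zero]
  rw [show ν + 1 / 2 + 1 / 2 = ν + 1 by ring, show 2 * (ν + 1 / 2) = 2 * ν + 1 by ring] at h3
  rw [show 2 * (ν + 1 / 2) = 2 * ν + 1 by ring] at h4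
  rw [show 1 - ν - ν = 1 - 2 * ν by ring, show 1 - ν + ν = 1 by ring, Complex.Gamma_one]
  calc _ = (Complex.Gamma (ν + 1 / 2) * Complex.Gamma (ν + 1)) *
        (Complex.Gamma (1 - ν) * Complex.Gamma (ν + 1)) * Complex.Gamma (1 - 2 * ν) *
        2 ^ (2 * ν) := by ring
    _ = (Complex.Gamma (1 - ν) * Complex.Gamma (ν + 1)) *
        (Complex.Gamma (1 - 2 * ν) * Complex.Gamma (2 * ν + 1)) * (Real.sqrt Real.pi : ℂ) *
        ((2 : ℂ) ^ (1 - (2 * ν + 1)) * 2 ^ (2 * ν)) := by rw [h3]; ring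
    _ = _ := by rw [h1, h2, h4, div_mul_div_comm]; ring

/-- The Gamma factors in the residue series at the poles `-2N`. -/
lemma Gamma_const_zero {ν : ℂ} (hν : ν ≠ 0) :
    Complex.Gamma (0 + 1 / 2) * Complex.Gamma (1 - 0) * Complex.Gamma (1 - 0 - ν) *
      Complex.Gamma (1 - 0 + ν) * Complex.Gamma (ν + 1) * Complex.Gamma (-ν + 1) * 2 ^ (2 * (0 : ℂ)) =
    (Real.sqrt Real.pi : ℂ) * Real.pi ^ 2 * ν ^ 2 / Complex.sin (Real.pi * ν) ^ 2 := by
  have h1 := Gamma_one_sub_mul_Gamma_one_add hν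
  have h2 : Complex.Gamma (1 / 2) = (Real.sqrt Real.pi : ℂ) := by
    rw [Complex.Gamma_one_half_eq, Real.sqrt_eq_rpow, Complex.ofReal_cpow Real.pi_pos.le]
    norm_num
  rw [sub_zero, zero_add, Complex.Gamma_one, h2, mul_zero, Complex.cpow_zero, add_comm 1 ν,
    show -ν + 1 = 1 - ν by ring]
  calc _ = (Real.sqrt Real.pi : ℂ) * (Complex.Gamma (1 - ν) * Complex.Gamma (ν + 1)) ^ 2 := by ring
    _ = _ := by rw [h1]; ring

/-- On the line `Re s = γ` the kernel `mbKer ν y 0` is the integrand of the Mellin–Barnes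
integral. -/
lemma mbKer_zero_eq {ν s : ℂ} {y : ℝ} (h0 : s / 2 ≠ 0) (h1 : s / 2 - ν ≠ 0) (h2 : s / 2 + ν ≠ 0) :
    mbKer ν y 0 s = Complex.Gamma ((1 - s) / 2) * Complex.Gamma (s / 2) *
      Complex.Gamma (s / 2 - ν) * Complex.Gamma (s / 2 + ν) * (y : ℂ) ^ (-s) := by
  have e : ∀ w, gammaShift 0 w = 1 := fun w => by simp [gammaShift]
  unfold mbKer mbNum
  rw [show s / 2 + 1 - ν = s / 2 - ν + 1 by ring, show s / 2 + 1 + ν = s / 2 + ν + 1 by ring,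
    Complex.Gamma_add_one _ h0, Complex.Gamma_add_one _ h1, Complex.Gamma_add_one _ h2]
  have hs : s * (s - 2 * ν) * (s + 2 * ν) = 8 * (s / 2 * (s / 2 - ν) * (s / 2 + ν)) := by ring
  rw [hs, div_eq_iff (mul_ne_zero (by norm_num) (mul_ne_zero (mul_ne_zero h0 h1) h2))]
  simp only [e, Nat.cast_zero, add_zero, mul_zero, zero_sub, mul_one, div_one]
  ring

section Final

variable {y : ℝ} {ν : ℂ} {γ : ℝ}

/-- The Mellin–Barnes integral in terms of `J_ν` and `J_{-ν}`. -/
lemma integral_mbKer_eq (hy : 0 < y) (hν₁ : 0 < ν.re)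
    (hγ₁ : 2 * ν.re < γ) (hγ₂ : γ < 1) :
    ∫ τ : ℝ, mbKer ν y 0 (γ + τ * Complex.I) =
      4 * Real.pi ^ 3 * (Real.sqrt Real.pi : ℂ) *
        ((besselJ ν y ^ 2 + besselJ (-ν) y ^ 2) /
            (Complex.sin (Real.pi * ν) * Complex.sin (Real.pi * (2 * ν))) -
          besselJ ν y * besselJ (-ν) y / Complex.sin (Real.pi * ν) ^ 2) := by
  have hν : ν ≠ 0 := fun h => by simp [h] at hν₁
  have hp : -(1 / 2) < ν.re := by linarith
  have hm : -(1 / 2) < (-ν).re := by simp; linarith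
  have r0 : ∀ N, rise N 0 = (N.factorial : ℂ) := rise_zero_right
  have s1 := hasSum_mbNum (ν := ν) hy hp hp (w := ν) (by ring) fun N => by
    rw [sub_self, r0, ← two_mul]; ring
  have s2 := hasSum_mbNum (ν := ν) hy hm hm (w := -ν) (by ring) fun N => by
    rw [neg_add_cancel, r0, show -ν - ν = 2 * -ν by ring]; ring
  have s3 := hasSum_mbNum (ν := ν) hy hp hm (w := 0) (by ring) fun N => by
    rw [mul_zero, zero_add, zero_sub, r0]; ring
  rw [Gamma_const_diag hν] at s1
  rw [show 1 - -ν - ν = 1 - -ν + -ν by ring, show 1 - -ν + ν = 1 - -ν - -ν by ring,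
    mul_right_comm (Complex.Gamma (-ν + 1 / 2) * Complex.Gamma (1 - -ν)),
    Gamma_const_diag (neg_ne_zero.2 hν)] at s2
  rw [Gamma_const_zero hν] at s3
  have hs := ((((s2.div_const (ν ^ 2)).add (s1.div_const (ν ^ 2))).sub
    ((s3.div_const (ν ^ 2)).mul_left 2)).mul_left (2 * (Real.pi : ℂ))).tendsto_sum_nat
  have ht := tendsto_sum_residues hy hν₁ hγ₁ hγ₂
  rw [show -2 * -ν = 2 * ν by ring, mul_zero] at hs
  rw [tendsto_nhds_unique ht hs, mul_neg, mul_neg, mul_neg, Complex.sin_neg, Complex.sin_neg,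
    neg_mul_neg]
  field_simp
  ring

end Final

/-- Mellin–Barnes integral representation of `J_ν²(ax) + Y_ν²(ax)`. -/
theorem besselJsq_add_besselYsq_mellin_barnes (a x : ℝ) (ν : ℂ) (γ : ℝ)
    (ha : 0 < a) (hx : 0 < x) (hν₁ : 0 < ν.re) (hν₂ : ν.re < 1 / 2)
    (hγ₁ : 2 * ν.re < γ) (hγ₂ : γ < 1) :
    besselJ ν ((a * x : ℝ) : ℂ) ^ 2 + besselY ν ((a * x : ℝ) : ℂ) ^ 2 =
      Complex.cos (Real.pi * ν) /
          (2 * (Real.pi : ℂ) ^ 3 * (Real.sqrt Real.pi : ℂ) * Complex.I) *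
        (Complex.I * ∫ τ : ℝ,
          Complex.Gamma ((1 - ((γ : ℂ) + τ * Complex.I)) / 2) *
            Complex.Gamma (((γ : ℂ) + τ * Complex.I) / 2) *
            Complex.Gamma (((γ : ℂ) + τ * Complex.I) / 2 - ν) *
            Complex.Gamma (((γ : ℂ) + τ * Complex.I) / 2 + ν) *
            ((a * x : ℝ) : ℂ) ^ (-((γ : ℂ) + τ * Complex.I))) := by
  have hy : 0 < a * x := mul_pos ha hx
  have hcos : Complex.cos (Real.pi * ν) ≠ 0 := by
    rw [Ne, Complex.cos_eq_zero_iff]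
    rintro ⟨k, hk⟩
    have hpi : (Real.pi : ℂ) ≠ 0 := by exact_mod_cast Real.pi_ne_zero
    have h : ν = (((2 * k + 1) / 2 : ℝ) : ℂ) := by
      apply mul_left_cancel₀ hpi
      rw [hk]
      push_cast
      ring
    rw [h, Complex.ofReal_re] at hν₁ hν₂
    have h1 : (0 : ℝ) < ((2 * k + 1 : ℤ) : ℝ) := by push_cast; linarith
    have h2 : ((2 * k + 1 : ℤ) : ℝ) < ((1 : ℤ) : ℝ) := by push_cast; linarith
    have h1' : 0 < 2 * k + 1 := by exact_mod_cast h1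
    have h2' : 2 * k + 1 < 1 := by exact_mod_cast h2
    omega
  have hsin : Complex.sin (Real.pi * ν) ≠ 0 := by
    rw [Ne, Complex.sin_eq_zero_iff]
    rintro ⟨k, hk⟩
    have hpi : (Real.pi : ℂ) ≠ 0 := by exact_mod_cast Real.pi_ne_zero
    have h : ν = ((k : ℝ) : ℂ) := by
      apply mul_left_cancel₀ hpi
      rw [hk]
      push_cast
      ring
    rw [h, Complex.ofReal_re] at hν₁ hν₂
    have h1 : 0 < k := by exact_mod_cast hν₁
    have h2 : (1 : ℝ) ≤ k := by exact_mod_cast h1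
    linarith
  have hker : ∀ τ : ℝ,
      Complex.Gamma ((1 - ((γ : ℂ) + τ * Complex.I)) / 2) *
            Complex.Gamma (((γ : ℂ) + τ * Complex.I) / 2) *
            Complex.Gamma (((γ : ℂ) + τ * Complex.I) / 2 - ν) *
            Complex.Gamma (((γ : ℂ) + τ * Complex.I) / 2 + ν) *
            ((a * x : ℝ) : ℂ) ^ (-((γ : ℂ) + τ * Complex.I)) =
        mbKer ν (a * x) 0 (γ + τ * Complex.I) := by
    intro τ
    have hre : (((γ : ℂ) + τ * Complex.I) / 2).re = γ / 2 := by
      rw [Complex.div_ofNat_re]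
      simp
    refine (mbKer_zero_eq ?_ ?_ ?_).symm
    all_goals
      intro h
      have := congrArg Complex.re h
      simp only [Complex.add_re, Complex.sub_re, Complex.zero_re, hre] at this
      linarith
  simp only [hker]
  rw [integral_mbKer_eq hy hν₁ hγ₁ hγ₂, besselY_eq hy (by linarith) hν₂ hsin,
    show (Real.pi : ℂ) * (2 * ν) = 2 * (Real.pi * ν) by ring, Complex.sin_two_mul]
  have hpi : (Real.pi : ℂ) ≠ 0 := by exact_mod_cast Real.pi_ne_zero
  have hsq : (Real.sqrt Real.pi : ℂ) ≠ 0 := by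
    exact_mod_cast (Real.sqrt_pos.2 Real.pi_pos).ne'
  have hI := Complex.I_ne_zero
  have hpyth := Complex.sin_sq_add_cos_sq (Real.pi * ν)
  generalize Complex.sin (Real.pi * ν) = S at *
  generalize Complex.cos (Real.pi * ν) = C at *
  generalize besselJ ν ((a * x : ℝ) : ℂ) = A
  generalize besselJ (-ν) ((a * x : ℝ) : ℂ) = B
  field_simp
  linear_combination 4 * A ^ 2 * hpyth
end

section
/- Fix $\nu \in \mathbb{C}$ with $0 < \mathrm{Re}\,\nu < 1/2$ and $\mu_0 \in \mathbb{R}$ with $-1 < \mu_0 < -1/2$. Then there is a constant $C > 0$ such that for all $w$ on the vertical line $\mathrm{Re}\,w = \mu_0$ and all $t > 1$, $\big| Q^{-\nu}_{-(w+1)/2}(t) \big| \le C\, |w|^{-\mathrm{Re}\,\nu}\, (t^2 - 1)^{-\mathrm{Re}\,\nu / 2}$. -/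
/-!
Write `μ = -(w + 1) / 2`, `a = (μ - ν + 1) / 2`, `b = a + 1 / 2` and `d = a + ν`, so that the
hypergeometric factor of `Q_μ^{-ν}(t)` is `₂F₁(b, a; b + d; x)` with `x = 1 / t²`.  Euler's integral
(`hyp2F1_eq_integral`) turns it into
`Γ(b + d) / (Γ(b) Γ(d)) * ∫₀¹ u^(b-1) (1-u)^(d-1) (1 - x u)^(-a) du`, and Legendre's duplication
formula for `Γ(2a) = Γ(μ - ν + 1)` makes all the Gamma factors collapse (`legendreQ_eq`) to a power
of `2` times `Γ(a) / Γ(a + ν) = B(a, ν) / Γ(ν)`.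

Every factor is now easy to estimate.  On the line `Re w = μ₀` the real part `σ` of `a` is fixed and
positive, so bounding the Euler integral by absolute values and using `1 - u ≤ 1 - x u` gives the
convergent integral `∫₀¹ u^(σ-1/2) (1-u)^(Re ν-1) du`, independent of `w` and `t`.  Moreover
`|t^(-μ+ν-1)| ≤ 1`, and `(t² - 1)^(-ν/2)` provides the factor on the right-hand side.

The decay in `w` comes from `B(a, ν) = O(|w|^(-Re ν))`.  To see it, split the beta integral at
`1 - δ`: the part near `1` is `O(δ^(Re ν))`, and an integration by parts on `[0, 1 - δ]` gains
`1 / |a|`, leaving `O(δ^(Re ν - 1) / |a|)` (`norm_betaIntegral_le`).  The choice `δ = 1 / (4 |w|)`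
balances the two, since `|w|` is at most a constant times `|a|`
(`exists_norm_betaIntegral_line_le`).
-/


open MeasureTheory Filter Set Topology Complex intervalIntegral

/-! ### Euler's integral for the hypergeometric series -/

/-- Binomial series `(1 - y)^(-a) = ∑ (a)ₙ / n! yⁿ` on the unit disc, with absolute convergence. -/
theorem hasSum_binomial_cpow (a y : ℂ) (hy : ‖y‖ < 1) :
    HasSum (fun n : ℕ => (ascPochhammer ℂ n).eval a / (n.factorial : ℂ) * y ^ n)
      ((1 - y) ^ (-a)) ∧
    Summable (fun n : ℕ => ‖(ascPochhammer ℂ n).eval a / (n.factorial : ℂ) * y ^ n‖) := by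
  have hp := one_div_one_sub_cpow_hasFPowerSeriesOnBall_zero a
  have hy' : y ∈ Metric.eball (0 : ℂ) 1 := by
    rw [← ENNReal.ofReal_one, Metric.eball_ofReal]
    simpa using hy
  have hc : ∀ n : ℕ, Ring.choose (a + n - 1) n =
      (ascPochhammer ℂ n).eval a / (n.factorial : ℂ) := by
    intro n
    rw [← Ring.multichoose_eq, eq_div_iff (by exact_mod_cast n.factorial_ne_zero), mul_comm,
      ← nsmul_eq_mul, Ring.factorial_nsmul_multichoose_eq_ascPochhammer,
      Polynomial.ascPochhammer_smeval_eq_eval]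
  constructor
  · have h := hp.hasSum hy'
    simpa [cpow_neg, hc, mul_comm] using h
  · have h := FormalMultilinearSeries.summable_norm_apply _
      (Metric.eball_subset_eball hp.r_le hy')
    simpa [hc, mul_comm] using h

theorem intervalIntegrable_beta_real {p q : ℝ} (hp : 0 < p) (hq : 0 < q) :
    IntervalIntegrable (fun u : ℝ => u ^ (p - 1) * (1 - u) ^ (q - 1)) volume 0 1 := by
  have h := (betaIntegral_convergent (u := (p : ℂ)) (v := (q : ℂ)) (by simpa) (by simpa)).norm
  refine h.congr_uIoo ?_
  intro u hu
  rw [uIoo_of_le zero_le_one] at hu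
  have h1 : (1 : ℂ) - u = ((1 - u : ℝ) : ℂ) := by push_cast; ring
  simp only [norm_mul]
  rw [h1, norm_cpow_eq_rpow_re_of_pos hu.1, norm_cpow_eq_rpow_re_of_pos (by linarith [hu.2])]
  simp

theorem norm_beta_integrand (b d : ℂ) {u : ℝ} (h0 : 0 < u) (h1 : u < 1) :
    ‖(u : ℂ) ^ (b - 1) * (1 - (u : ℂ)) ^ (d - 1)‖ =
      u ^ (b.re - 1) * (1 - u) ^ (d.re - 1) := by
  have h : (1 : ℂ) - u = ((1 - u : ℝ) : ℂ) := by push_cast; ring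
  rw [norm_mul, h, norm_cpow_eq_rpow_re_of_pos h0, norm_cpow_eq_rpow_re_of_pos (by linarith)]
  simp

/-- `B(b + n, d) = (b)ₙ / (b + d)ₙ * B(b, d)`, with `B(b, d)` written in Gamma functions. -/
theorem betaIntegral_add_nat {b d : ℂ} (hb : 0 < b.re) (hd : 0 < d.re) (n : ℕ) :
    betaIntegral (b + n) d = (ascPochhammer ℂ n).eval b / (ascPochhammer ℂ n).eval (b + d) *
      (Gamma b * Gamma d / Gamma (b + d)) := by
  have hbd : 0 < (b + d).re := by simpa using add_pos hb hd
  have key : ∀ z : ℂ, 0 < z.re → Gamma (z + n) = (ascPochhammer ℂ n).eval z * Gamma z := by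
    intro z hz
    have hz' : ∀ k : ℕ, z ≠ -k := by
      rintro k rfl
      have : (0 : ℝ) ≤ k := k.cast_nonneg
      simp only [neg_re, natCast_re] at hz
      linarith
    rw [← Gamma_add_nat_div_Gamma_eq z hz', div_mul_cancel₀ _ (Gamma_ne_zero_of_re_pos hz)]
  have hn : ∀ z : ℂ, 0 < z.re → 0 < (z + n).re := by
    intro z hz
    simp only [add_re, natCast_re]; positivity
  have h := Gamma_mul_Gamma_eq_betaIntegral (hn b hb) hd
  have e : b + n + d = b + d + n := by ring
  have g0 := Gamma_ne_zero_of_re_pos hbd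
  have g1 := Gamma_ne_zero_of_re_pos (hn _ hbd)
  rw [e] at h
  rw [key _ hbd] at g1 h
  rw [key _ hb] at h
  have g2 := left_ne_zero_of_mul g1
  field_simp
  linear_combination -h

/-- Euler's integral representation of `₂F₁(b, a; b + d; x)` for `0 ≤ x < 1`: expand
`(1 - x u)^(-a)` in its binomial series and integrate term by term. -/
theorem hyp2F1_eq_integral {a b d : ℂ} (hb : 0 < b.re) (hd : 0 < d.re) {x : ℝ} (hx0 : 0 ≤ x)
    (hx1 : x < 1) :
    hyp2F1 b a (b + d) (x : ℂ) * (Gamma b * Gamma d / Gamma (b + d)) =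
      ∫ u : ℝ in 0..1, (u : ℂ) ^ (b - 1) * (1 - (u : ℂ)) ^ (d - 1) *
        (1 - (x : ℂ) * u) ^ (-a) := by
  have hint := betaIntegral_convergent hb hd
  have hxn : ‖(x : ℂ)‖ < 1 := by simpa [abs_of_nonneg hx0] using hx1
  set G : ℝ → ℂ := fun u => (u : ℂ) ^ (b - 1) * (1 - (u : ℂ)) ^ (d - 1) with hG
  set k : ℕ → ℂ := fun n => (ascPochhammer ℂ n).eval a / (n.factorial : ℂ) with hk
  have hs := (hasSum_binomial_cpow a (x : ℂ) hxn).2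
  have hsum : HasSum (fun n : ℕ => ∫ u : ℝ in 0..1, k n * ((x : ℂ) * u) ^ n * G u)
      (∫ u : ℝ in 0..1, G u * (1 - (x : ℂ) * u) ^ (-a)) := by
    refine intervalIntegral.hasSum_integral_of_dominated_convergence
      (fun n u => ‖k n * (x : ℂ) ^ n‖ * ‖G u‖) ?_ ?_ ?_ ?_ ?_
    · intro n
      have h1 := (intervalIntegrable_iff.mp hint).aestronglyMeasurable
      exact (Continuous.aestronglyMeasurable (by fun_prop)).mul h1
    · intro n
      refine Eventually.of_forall fun u hu => ?_
      rw [uIoc_of_le zero_le_one] at hu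
      rw [norm_mul, mul_pow, ← mul_assoc, norm_mul]
      have : ‖(u : ℂ) ^ n‖ ≤ 1 := by
        rw [norm_pow, Complex.norm_of_nonneg hu.1.le]
        exact pow_le_one₀ hu.1.le hu.2
      gcongr
      exact mul_le_of_le_one_right (norm_nonneg _) this
    · exact Eventually.of_forall fun u _ => hs.mul_right _
    · simp_rw [tsum_mul_right]
      exact hint.norm.const_mul _
    · refine Eventually.of_forall fun u hu => ?_
      rw [uIoc_of_le zero_le_one] at hu
      have hy : ‖(x : ℂ) * u‖ < 1 := by
        rw [norm_mul, Complex.norm_of_nonneg hx0, Complex.norm_of_nonneg hu.1.le]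
        nlinarith [hu.1, hu.2]
      have := ((hasSum_binomial_cpow a _ hy).1).mul_right (G u)
      rwa [mul_comm ((1 - (x : ℂ) * u) ^ (-a))] at this
  rw [← hsum.tsum_eq, hyp2F1, ← tsum_mul_right]
  congr 1
  ext n
  have hB : ∫ u : ℝ in 0..1, k n * ((x : ℂ) * u) ^ n * G u =
      k n * (x : ℂ) ^ n * betaIntegral (b + n) d := by
    rw [betaIntegral, ← intervalIntegral.integral_const_mul]
    refine intervalIntegral.integral_congr_ae (Eventually.of_forall fun u hu => ?_)
    rw [uIoc_of_le zero_le_one] at hu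
    have hu0 : (u : ℂ) ≠ 0 := by exact_mod_cast hu.1.ne'
    have : (u : ℂ) ^ (b + n - 1) = (u : ℂ) ^ (b - 1) * (u : ℂ) ^ n := by
      rw [← cpow_natCast, ← cpow_add _ _ hu0]; ring_nf
    rw [this, mul_pow]
    simp only [hG]
    ring
  rw [hB, betaIntegral_add_nat hb hd]
  simp only [hk]
  rw [mul_comm ((ascPochhammer ℂ n).eval (b + d)), ← div_div]
  ring

/-- The Euler integral is bounded uniformly in `x < 1`, by a quantity depending only on the real
parts of the parameters. -/
theorem norm_euler_integral_le {a b d : ℂ} (ha : 0 < a.re) (hb : 0 < b.re) (hda : a.re < d.re)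
    {x : ℝ} (hx1 : x < 1) :
    ‖∫ u : ℝ in 0..1, (u : ℂ) ^ (b - 1) * (1 - (u : ℂ)) ^ (d - 1) *
        (1 - (x : ℂ) * u) ^ (-a)‖ ≤
      ∫ u : ℝ in 0..1, u ^ (b.re - 1) * (1 - u) ^ (d.re - a.re - 1) := by
  refine intervalIntegral.norm_integral_le_of_norm_le zero_le_one ?_
    (intervalIntegrable_beta_real hb (by linarith))
  -- At `u = 1` the convention `0 ^ 0 = 1` may break the pointwise bound, so that null set is
  -- discarded.
  filter_upwards [Measure.ae_ne volume (1 : ℝ)] with u hu1 hu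
  have hu' : u < 1 := lt_of_le_of_ne hu.2 hu1
  have hxu : 1 - u ≤ 1 - x * u := by nlinarith [hu.1]
  have e : (1 : ℂ) - (x : ℂ) * u = ((1 - x * u : ℝ) : ℂ) := by push_cast; ring
  rw [norm_mul, norm_beta_integrand b d hu.1 hu', e,
    norm_cpow_eq_rpow_re_of_pos (by linarith), neg_re]
  calc u ^ (b.re - 1) * (1 - u) ^ (d.re - 1) * (1 - x * u) ^ (-a.re)
      ≤ u ^ (b.re - 1) * (1 - u) ^ (d.re - 1) * (1 - u) ^ (-a.re) := by
        have h0 : 0 ≤ u := hu.1.le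
        have h1 : 0 ≤ 1 - u := by linarith
        gcongr ?_ * ?_
        exact Real.rpow_le_rpow_of_nonpos (by linarith) hxu (by linarith)
    _ = _ := by
        rw [mul_assoc, ← Real.rpow_add (by linarith)]
        ring_nf

/-! ### Decay of the beta function on vertical lines -/

/-- Estimate of `B(a, ν)` by cutting the integral at `1 - δ`. The absolute value is taken directly on
`[1 - δ, 1]`, and after integrating by parts on `[0, 1 - δ]`; the constants do not depend on `a`. -/
theorem norm_betaIntegral_le {a ν : ℂ} (ha : 0 < a.re) (hν : 0 < ν.re) (hν1 : ν.re < 1) {δ : ℝ}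
    (hδ : 0 < δ) (hδ2 : δ ≤ 1 / 2) :
    ‖betaIntegral a ν‖ ≤ 2 / ν.re * δ ^ ν.re +
      (1 + ‖ν - 1‖ / (1 - ν.re)) * δ ^ (ν.re - 1) / ‖a‖ := by
  have hint := betaIntegral_convergent ha hν
  have ha0 : a ≠ 0 := by rintro rfl; simp at ha
  set G : ℝ → ℂ := fun u => (u : ℂ) ^ (a - 1) * (1 - (u : ℂ)) ^ (ν - 1) with hG
  have hc : 1 - δ ∈ Set.uIcc (0 : ℝ) 1 := by
    rw [Set.uIcc_of_le zero_le_one]; constructor <;> linarith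
  have hint1 : IntervalIntegrable G volume 0 (1 - δ) :=
    hint.mono_set (Set.uIcc_subset_uIcc Set.left_mem_uIcc hc)
  have hint2 : IntervalIntegrable G volume (1 - δ) 1 :=
    hint.mono_set (Set.uIcc_subset_uIcc hc Set.right_mem_uIcc)
  have hsplit : betaIntegral a ν = (∫ u in (0 : ℝ)..(1 - δ), G u) + ∫ u in (1 - δ)..1, G u :=
    (intervalIntegral.integral_add_adjacent_intervals hint1 hint2).symm
  have hright : ‖∫ u in (1 - δ)..1, G u‖ ≤ 2 / ν.re * δ ^ ν.re := by
    have hI : IntervalIntegrable (fun u : ℝ => 2 * (1 - u) ^ (ν.re - 1)) volume (1 - δ) 1 := by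
      have := (intervalIntegral.intervalIntegrable_rpow' (a := δ) (b := 0) (r := ν.re - 1)
        (by linarith)).comp_sub_left 1
      simpa using this.const_mul 2
    refine (intervalIntegral.norm_integral_le_of_norm_le (by linarith) ?_ hI).trans_eq ?_
    · filter_upwards [Measure.ae_ne volume (1 : ℝ)] with u hu1 hu
      have hu' : u < 1 := lt_of_le_of_ne hu.2 hu1
      have hu0 : 1 / 2 ≤ u := by linarith [hu.1]
      have hu00 : 0 < u := by linarith
      rw [hG, norm_beta_integrand a ν hu00 hu']
      have h1 : 0 ≤ 1 - u := by linarith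
      gcongr
      calc u ^ (a.re - 1) ≤ u ^ (-1 : ℝ) :=
            Real.rpow_le_rpow_of_exponent_ge hu00 hu'.le (by linarith)
        _ ≤ 2 := by
            rw [Real.rpow_neg_one]
            exact inv_le_of_inv_le₀ (by norm_num) (by linarith)
    · rw [intervalIntegral.integral_const_mul,
        intervalIntegral.integral_comp_sub_left (fun u : ℝ => u ^ (ν.re - 1)) 1,
        integral_rpow (Or.inl (by linarith))]
      rw [sub_self, sub_sub_cancel, sub_add_cancel, Real.zero_rpow hν.ne']
      ring
  have hleft : ‖∫ u in (0 : ℝ)..(1 - δ), G u‖ ≤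
      (1 + ‖ν - 1‖ / (1 - ν.re)) * δ ^ (ν.re - 1) / ‖a‖ := by
    set H : ℝ → ℂ := fun u => (u : ℂ) ^ a * (1 - (u : ℂ)) ^ (ν - 2) with hH
    have hslit : ∀ u : ℝ, u ≤ 1 - δ → (1 : ℂ) - u ∈ slitPlane := by
      intro u hu
      left
      simp only [sub_re, one_re, ofReal_re]
      linarith
    have hcont1 : Continuous fun u : ℝ => (u : ℂ) ^ a := continuous_ofReal_cpow_const ha
    have hcont2 : ∀ s : ℂ, ContinuousOn (fun u : ℝ => (1 - (u : ℂ)) ^ s) (Set.Icc 0 (1 - δ)) :=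
      fun s => ContinuousOn.cpow_const (by fun_prop) fun u hu => hslit u hu.2
    have hHint : IntervalIntegrable H volume 0 (1 - δ) := by
      apply ContinuousOn.intervalIntegrable
      rw [Set.uIcc_of_le (by linarith)]
      exact hcont1.continuousOn.mul (hcont2 _)
    -- Integration by parts: the integrand is the derivative of `u^a (1-u)^(ν-1)`.
    have hparts : ∫ u in (0 : ℝ)..(1 - δ), (a * G u - (ν - 1) * H u) =
        ((1 - δ : ℝ) : ℂ) ^ a * (1 - ((1 - δ : ℝ) : ℂ)) ^ (ν - 1) -
        ((0 : ℝ) : ℂ) ^ a * (1 - ((0 : ℝ) : ℂ)) ^ (ν - 1) := by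
      refine intervalIntegral.integral_eq_sub_of_hasDerivAt_of_le
        (f := fun u : ℝ => (u : ℂ) ^ a * (1 - (u : ℂ)) ^ (ν - 1)) (by linarith)
        (hcont1.continuousOn.mul (hcont2 _)) ?_ ((hint1.const_mul a).sub (hHint.const_mul _))
      intro u hu
      have d1 : HasDerivAt (fun z : ℂ => z ^ a) (a * (u : ℂ) ^ (a - 1) * 1) (u : ℂ) :=
        (hasDerivAt_id _).cpow_const (Or.inl hu.1)
      have d2 : HasDerivAt (fun z : ℂ => (1 - z) ^ (ν - 1))
          ((ν - 1) * (1 - (u : ℂ)) ^ (ν - 1 - 1) * -1) (u : ℂ) :=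
        ((hasDerivAt_id (u : ℂ)).const_sub 1).cpow_const (hslit u hu.2.le)
      have := (d1.mul d2).comp_ofReal
      convert! this using 1
      simp only [hG, hH]
      rw [show ν - 1 - 1 = ν - 2 by ring]
      ring
    have hHle : ‖∫ u in (0 : ℝ)..(1 - δ), H u‖ ≤ δ ^ (ν.re - 1) / (1 - ν.re) := by
      have hnot : (0 : ℝ) ∉ Set.uIcc δ 1 := by
        rw [Set.uIcc_of_le (by linarith)]; exact fun h => absurd h.1 (by linarith)
      have hI : IntervalIntegrable (fun u : ℝ => (1 - u) ^ (ν.re - 2)) volume 0 (1 - δ) := by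
        have := (intervalIntegral.intervalIntegrable_rpow (a := 1) (b := δ) (μ := volume)
          (r := ν.re - 2) (Or.inr (by rwa [Set.uIcc_comm]))).comp_sub_left 1
        simpa using this
      refine (intervalIntegral.norm_integral_le_of_norm_le (by linarith) ?_ hI).trans ?_
      · refine Eventually.of_forall fun u hu => ?_
        have e : (1 : ℂ) - (u : ℂ) = ((1 - u : ℝ) : ℂ) := by push_cast; ring
        have h1 : 0 < 1 - u := by linarith [hu.2]
        simp only [hH]
        rw [norm_mul, e, norm_cpow_eq_rpow_re_of_pos hu.1, norm_cpow_eq_rpow_re_of_pos h1]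
        have : (ν - 2).re = ν.re - 2 := by simp
        rw [this]
        exact mul_le_of_le_one_left (Real.rpow_nonneg h1.le _)
          (Real.rpow_le_one hu.1.le (by linarith) ha.le)
      · rw [intervalIntegral.integral_comp_sub_left (fun u : ℝ => u ^ (ν.re - 2)) 1,
          sub_zero, sub_sub_cancel, integral_rpow (Or.inr ⟨by linarith, hnot⟩), Real.one_rpow,
          show ν.re - 2 + 1 = -(1 - ν.re) by ring, show ν.re - 1 = -(1 - ν.re) by ring, div_neg,
          ← neg_div, neg_sub]
        gcongr
        linarith
    rw [intervalIntegral.integral_sub (hint1.const_mul a) (hHint.const_mul _),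
      intervalIntegral.integral_const_mul, intervalIntegral.integral_const_mul, ofReal_zero,
      zero_cpow ha0, zero_mul, sub_zero] at hparts
    have hb : ‖((1 - δ : ℝ) : ℂ) ^ a * (1 - ((1 - δ : ℝ) : ℂ)) ^ (ν - 1)‖ ≤ δ ^ (ν.re - 1) := by
      have e : (1 : ℂ) - ((1 - δ : ℝ) : ℂ) = (δ : ℂ) := by push_cast; ring
      rw [e, norm_mul, norm_cpow_eq_rpow_re_of_pos (by linarith), norm_cpow_eq_rpow_re_of_pos hδ]
      simp only [sub_re, one_re]
      exact mul_le_of_le_one_left (Real.rpow_nonneg hδ.le _)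
        (Real.rpow_le_one (by linarith) (by linarith) ha.le)
    rw [le_div_iff₀ (norm_pos_iff.mpr ha0), mul_comm, ← norm_mul, eq_add_of_sub_eq hparts]
    refine (norm_add_le _ _).trans ?_
    rw [norm_mul (ν - 1)]
    calc _ ≤ δ ^ (ν.re - 1) + ‖ν - 1‖ * (δ ^ (ν.re - 1) / (1 - ν.re)) := by gcongr
      _ = _ := by ring
  rw [hsplit, add_comm]
  exact (norm_add_le _ _).trans (add_le_add hright hleft)

/-- The beta factor `B(a, ν)`, with `a = (-(w + 1) / 2 - ν + 1) / 2`, is `O(|w|^(-Re ν))` along the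
line `Re w = μ₀`. -/
theorem exists_norm_betaIntegral_line_le (ν : ℂ) (μ₀ : ℝ) (hν : 0 < ν.re) (hν2 : ν.re < 1 / 2)
    (hμ : μ₀ < -(1 / 2)) :
    ∃ K : ℝ, 0 < K ∧ ∀ w : ℂ, w.re = μ₀ →
      ‖betaIntegral ((-(w + 1) / 2 - ν + 1) / 2) ν‖ ≤ K * ‖w‖ ^ (-ν.re) := by
  set σ : ℝ := (1 - μ₀ - 2 * ν.re) / 4 with hσ
  have hσ0 : 0 < σ := by rw [hσ]; linarith
  set M : ℝ := 4 + ‖1 - 2 * ν‖ / σ with hM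
  have hM0 : 0 < M := by positivity
  have hr1 : 0 < 1 - ν.re := by linarith
  set B : ℝ := 1 + ‖ν - 1‖ / (1 - ν.re) with hB
  have hB0 : 0 < B := by positivity
  clear_value B
  refine ⟨2 / ν.re * (1 / 4) ^ ν.re + B * (1 / 4) ^ (ν.re - 1) * M, by positivity, ?_⟩
  intro w hw
  set a : ℂ := (-(w + 1) / 2 - ν + 1) / 2 with ha
  have hare : a.re = σ := by
    rw [ha, show (2 : ℂ) = ((2 : ℝ) : ℂ) by norm_num, div_ofReal_re, add_re, sub_re, div_ofReal_re,
      neg_re, add_re, hw, one_re, hσ]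
    ring
  have hwn : 1 / 2 ≤ ‖w‖ := by
    refine le_trans ?_ (abs_re_le_norm w)
    rw [hw, abs_of_neg (by linarith)]; linarith
  have hw0 : 0 < ‖w‖ := by linarith
  have haσ : σ ≤ ‖a‖ := by rw [← hare]; exact re_le_norm a
  have ha0 : 0 < ‖a‖ := by linarith
  have hwa : ‖w‖ ≤ M * ‖a‖ := by
    have e : w = -(4 * a) + (1 - 2 * ν) := by rw [ha]; ring
    calc ‖w‖ ≤ ‖-(4 * a)‖ + ‖1 - 2 * ν‖ := by
          conv_lhs => rw [e]
          exact norm_add_le _ _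
      _ = 4 * ‖a‖ + ‖1 - 2 * ν‖ / σ * σ := by
          rw [norm_neg, norm_mul, div_mul_cancel₀ _ hσ0.ne']; simp
      _ ≤ 4 * ‖a‖ + ‖1 - 2 * ν‖ / σ * ‖a‖ := by gcongr
      _ = _ := by rw [hM]; ring
  have hδ2 : 1 / 4 * ‖w‖⁻¹ ≤ 1 / 2 := by
    have : ‖w‖⁻¹ ≤ 2 := inv_le_of_inv_le₀ (by norm_num) (by linarith)
    linarith
  -- `δ = 1 / (4 |w|)` is at most `1 / 2` because `|w| ≥ |μ₀| > 1 / 2`.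
  have h := norm_betaIntegral_le (a := a) (by rwa [hare]) hν (by linarith)
    (show 0 < 1 / 4 * ‖w‖⁻¹ by positivity) hδ2
  rw [← hB] at h
  refine h.trans ?_
  have hpow : ∀ s : ℝ, (1 / 4 * ‖w‖⁻¹) ^ s = (1 / 4) ^ s * ‖w‖ ^ (-s) := by
    intro s
    rw [Real.mul_rpow (by norm_num) (by positivity), Real.inv_rpow hw0.le, Real.rpow_neg hw0.le]
  rw [hpow, hpow, add_mul, ← mul_assoc (2 / ν.re)]
  refine add_le_add le_rfl ?_
  have e2 : ‖w‖ ^ (-(ν.re - 1)) = ‖w‖ * ‖w‖ ^ (-ν.re) := by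
    rw [show -(ν.re - 1) = 1 + -ν.re by ring, Real.rpow_add hw0, Real.rpow_one]
  rw [e2, div_le_iff₀ ha0]
  calc B * ((1 / 4) ^ (ν.re - 1) * (‖w‖ * ‖w‖ ^ (-ν.re)))
      = B * (1 / 4) ^ (ν.re - 1) * ‖w‖ ^ (-ν.re) * ‖w‖ := by ring
    _ ≤ B * (1 / 4) ^ (ν.re - 1) * ‖w‖ ^ (-ν.re) * (M * ‖a‖) := by gcongr
    _ = _ := by ring

/-! ### The Legendre function -/

/-- Euler-type integral for `Q_μ^{-ν}(t)`, `t > 1`, after simplifying the Gamma factors by the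
duplication formula; the integral is the one for `₂F₁(b, a; b + d; 1 / t²)` with
`a = (μ - ν + 1) / 2`, `b = a + 1 / 2`, `d = a + ν`. -/
theorem legendreQ_eq (ν μ : ℂ) (h1 : 0 < (μ - ν + 1).re) (h2 : 0 < ν.re) {t : ℝ} (ht : 1 < t) :
    legendreQ (-ν) μ (t : ℂ) =
      exp (-ν * Real.pi * I) * 2 ^ (-μ - 1) * 2 ^ (μ - ν) *
        (betaIntegral ((μ - ν + 1) / 2) ν / Gamma ν) *
        (t : ℂ) ^ (-μ + ν - 1) * ((t : ℂ) ^ 2 - 1) ^ (-ν / 2) *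
        ∫ u : ℝ in 0..1, (u : ℂ) ^ ((μ - ν + 1) / 2 + 1 / 2 - 1) *
          (1 - (u : ℂ)) ^ ((μ - ν + 1) / 2 + ν - 1) *
          (1 - ((1 / t ^ 2 : ℝ) : ℂ) * u) ^ (-((μ - ν + 1) / 2)) := by
  set a : ℂ := (μ - ν + 1) / 2 with ha
  have hare : 0 < a.re := by
    have : a.re = (μ - ν + 1).re / 2 := by
      rw [ha, show (2 : ℂ) = ((2 : ℝ) : ℂ) by norm_num, div_ofReal_re]
    rw [this]; linarith
  have hb : 0 < (a + 1 / 2).re := by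
    rw [show (1 / 2 : ℂ) = ((1 / 2 : ℝ) : ℂ) by norm_num, add_re, ofReal_re]; linarith
  have hd : 0 < (a + ν).re := by rw [add_re]; linarith
  have ht2 : 1 < t ^ 2 := by nlinarith
  have hF := hyp2F1_eq_integral (a := a) hb hd (x := 1 / t ^ 2) (by positivity)
    (by rw [div_lt_one (by positivity)]; exact ht2)
  have hdup := Gamma_mul_Gamma_add_half a
  have hbeta := Gamma_mul_Gamma_eq_betaIntegral hare h2
  have hcd : a + 1 / 2 + (a + ν) = μ + 3 / 2 := by rw [ha]; ring
  have hc : 0 < (μ + 3 / 2).re := by rw [← hcd, add_re]; linarith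
  have g1 := Gamma_ne_zero_of_re_pos hare
  have g2 := Gamma_ne_zero_of_re_pos hb
  have g3 := Gamma_ne_zero_of_re_pos hd
  have g4 := Gamma_ne_zero_of_re_pos hc
  have g5 := Gamma_ne_zero_of_re_pos h2
  rw [← hF, hcd, legendreQ]
  have e1 : (μ + -ν + 2) / 2 = a + 1 / 2 := by rw [ha]; ring
  have e2 : (μ + -ν + 1) / 2 = a := by rw [ha]; ring
  have e3 : μ + -ν + 1 = 2 * a := by rw [ha]; ring
  have e4 : (1 : ℂ) / (t : ℂ) ^ 2 = ((1 / t ^ 2 : ℝ) : ℂ) := by push_cast; ring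
  have e5 : -μ - -ν - 1 = -μ + ν - 1 := by ring
  rw [e1, e2, e3, e4, e5]
  have e6 : (2 : ℂ) ^ (μ - ν) * (2 : ℂ) ^ (1 - 2 * a) = 1 := by
    rw [← cpow_add _ _ two_ne_zero, ha]; ring_nf; simp
  have key : (Real.sqrt Real.pi : ℂ) * (Gamma (2 * a) / Gamma (μ + 3 / 2)) =
      2 ^ (μ - ν) * (betaIntegral a ν / Gamma ν) *
        (Gamma (a + 1 / 2) * Gamma (a + ν) / Gamma (μ + 3 / 2)) := by
    generalize Gamma (μ + 3 / 2) = Gc at g4 ⊢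
    generalize Gamma (a + 1 / 2) = Gb at g2 hdup ⊢
    field_simp
    linear_combination (-(Real.sqrt Real.pi : ℂ) * Gamma (2 * a) * Gamma ν) * e6 -
      2 ^ (μ - ν) * Gamma ν * hdup + 2 ^ (μ - ν) * Gb * hbeta
  linear_combination (exp (-ν * Real.pi * I) * 2 ^ (-μ - 1) * (t : ℂ) ^ (-μ + ν - 1) *
    ((t : ℂ) ^ 2 - 1) ^ (-ν / 2) *
    hyp2F1 (a + 1 / 2) a (μ + 3 / 2) ((1 / t ^ 2 : ℝ) : ℂ)) * key

/-- Uniform estimate for `Q^{-ν}_{-(w+1)/2}(t)` on a vertical line `Re w = μ₀ ∈ (-1, -1/2)`: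
`|Q^{-ν}_{-(w+1)/2}(t)| ≤ C |w|^{-Re ν} (t² - 1)^{-Re ν / 2}` for all `t > 1`. -/
theorem legendreQ_uniform_estimate_w (ν : ℂ) (μ₀ : ℝ)
    (hν₁ : 0 < ν.re) (hν₂ : ν.re < 1 / 2) (hμ₁ : -1 < μ₀) (hμ₂ : μ₀ < -(1 / 2)) :
    ∃ C : ℝ, 0 < C ∧ ∀ w : ℂ, w.re = μ₀ → ∀ t : ℝ, 1 < t →
      ‖legendreQ (-ν) (-(w + 1) / 2) (t : ℂ)‖ ≤
        C * ‖w‖ ^ (-ν.re) * (t ^ 2 - 1) ^ (-ν.re / 2) := by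
  obtain ⟨K, hK, hbeta⟩ := exists_norm_betaIntegral_line_le ν μ₀ hν₁ hν₂ hμ₂
  have hΓ : 0 < ‖Gamma ν‖ := norm_pos_iff.mpr (Gamma_ne_zero_of_re_pos hν₁)
  set σ : ℝ := (1 - μ₀ - 2 * ν.re) / 4 with hσ
  set m : ℝ := -(μ₀ + 1) / 2 with hm
  set J : ℝ := ∫ u : ℝ in 0..1, u ^ (σ + 1 / 2 - 1) * (1 - u) ^ (σ + ν.re - σ - 1) with hJ
  have hJ0 : 0 ≤ J := by
    refine intervalIntegral.integral_nonneg zero_le_one fun u hu => ?_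
    exact mul_nonneg (Real.rpow_nonneg hu.1 _) (Real.rpow_nonneg (by linarith [hu.2]) _)
  set A : ℝ := ‖exp (-ν * Real.pi * I)‖ * 2 ^ (-m - 1) * 2 ^ (m - ν.re) with hA
  have hA0 : 0 < A := by
    have := norm_pos_iff.mpr (exp_ne_zero (-ν * Real.pi * I))
    positivity
  -- `J + 1` rather than `J` keeps the constant visibly positive.
  refine ⟨A * (K / ‖Gamma ν‖) * (J + 1), by positivity, ?_⟩
  intro w hw t ht
  have hmre : (-(w + 1) / 2 : ℂ).re = m := by simp [hm, hw]
  set μ : ℂ := -(w + 1) / 2 with hμ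
  have h1 : (μ - ν + 1).re = 2 * σ := by
    simp only [add_re, sub_re, one_re, hmre]; rw [hm, hσ]; ring
  have hσ0 : 0 < σ := by rw [hσ]; linarith
  have hare : ((μ - ν + 1) / 2).re = σ := by
    rw [show (2 : ℂ) = ((2 : ℝ) : ℂ) by norm_num, div_ofReal_re, h1]; ring
  rw [legendreQ_eq ν μ (by rw [h1]; linarith) hν₁ ht]
  have ht2 : 1 < t ^ 2 := by nlinarith
  have hbre : ((μ - ν + 1) / 2 + 1 / 2).re = σ + 1 / 2 := by
    rw [add_re, hare, show (1 / 2 : ℂ) = ((1 / 2 : ℝ) : ℂ) by norm_num, ofReal_re]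
  have hdre : ((μ - ν + 1) / 2 + ν).re = σ + ν.re := by rw [add_re, hare]
  have hI := norm_euler_integral_le (a := (μ - ν + 1) / 2) (b := (μ - ν + 1) / 2 + 1 / 2)
    (d := (μ - ν + 1) / 2 + ν) (by rw [hare]; exact hσ0) (by rw [hbre]; linarith)
    (by rw [hare, hdre]; linarith) (x := 1 / t ^ 2)
    (by rw [div_lt_one (by positivity)]; exact ht2)
  rw [hbre, hdre, hare, ← hJ] at hI
  have n2 : ∀ s : ℂ, ‖(2 : ℂ) ^ s‖ = 2 ^ s.re := fun s => by
    exact_mod_cast norm_cpow_eq_rpow_re_of_pos (x := 2) two_pos s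
  have nt : ‖(t : ℂ) ^ (-μ + ν - 1)‖ ≤ 1 := by
    rw [norm_cpow_eq_rpow_re_of_pos (by linarith)]
    refine Real.rpow_le_one_of_one_le_of_nonpos ht.le ?_
    simp only [add_re, sub_re, one_re, neg_re, hmre]
    rw [hm]; linarith
  have nt2 : ‖((t : ℂ) ^ 2 - 1) ^ (-ν / 2)‖ = (t ^ 2 - 1) ^ (-ν.re / 2) := by
    rw [show (t : ℂ) ^ 2 - 1 = ((t ^ 2 - 1 : ℝ) : ℂ) by push_cast; ring,
      norm_cpow_eq_rpow_re_of_pos (by linarith), show (2 : ℂ) = ((2 : ℝ) : ℂ) by norm_num,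
      div_ofReal_re, neg_re]
  have hT : 0 ≤ (t ^ 2 - 1) ^ (-ν.re / 2) := Real.rpow_nonneg (by linarith) _
  have hbw := hbeta w hw
  rw [← hμ] at hbw
  simp only [norm_mul, norm_div, n2, nt2]
  rw [sub_re, neg_re, hmre, one_re, sub_re, hmre, ← hA]
  calc _ ≤ A * (K * ‖w‖ ^ (-ν.re) / ‖Gamma ν‖) * 1 * (t ^ 2 - 1) ^ (-ν.re / 2) * (J + 1) := by
        gcongr
        linarith
    _ = _ := by ring
end
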